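/- arXiv:2110.13886 — 2 statements merged into one kernel-verified Lean document; each statement's English description precedes it below -/
import Mathlib

section
/- For every integer e ≥ 7 and each i ∈ {2,3}, there exists a finite metabelian σ-group M of order 3^{8+e}, generated by two elements x and y satisfying w^3 = 1, y^3 = s₃^2 s₄, s_j^3 = s_{j+2}^2 s_{j+3} for j = 2,3,4, s₅^3 = s₇^2, and t₃ = s₇ w^{i-1}, whose abelianization is isomorphic to (ZMod (3^e)) × (ZMod 3); moreover there exists a finite group G of order 3^{10+e} with the same abelianization, admitting a σ-automorphism, with second derived subgroup nontrivial and third derived subgroup trivial (derived length exactly 3), such that G/G'' is isomorphic to M. -/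
/-- The commutator `[a,b] = a⁻¹ * b⁻¹ * a * b`. -/
def comm' {G : Type*} [Group G] (a b : G) : G := a⁻¹ * b⁻¹ * a * b

/-- `s₂ = [y,x]` and `s_j = [s_(j-1), x]` for `j ≥ 3`. -/
def sgen {G : Type*} [Group G] (x y : G) : ℕ → G
  | 0 => 1
  | 1 => 1
  | 2 => comm' y x
  | (n + 3) => comm' (sgen x y (n + 2)) x

/-- `t_j = [s_(j-1), y]` for `j ≥ 3`. -/
def tgenD {G : Type*} [Group G] (x y : G) (j : ℕ) : G := comm' (sgen x y (j - 1)) y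

/-- `t₂ = [y,x]` and `t_j = [t_(j-1), y]` for `j ≥ 3`. -/
def tgenB {G : Type*} [Group G] (x y : G) : ℕ → G
  | 0 => 1
  | 1 => 1
  | 2 => comm' y x
  | (n + 3) => comm' (tgenB x y (n + 2)) y

/-- A σ-group: a group admitting an automorphism acting as inversion on the
abelianization. -/
def IsSigmaGroup (G : Type*) [Group G] : Prop :=
  ∃ σ : G ≃* G, ∀ g : G, Abelianization.of (σ g) = (Abelianization.of g)⁻¹

/-- A group is metabelian if its commutator subgroup is abelian, i.e. the second
derived subgroup is trivial. -/
def IsMetabelian (G : Type*) [Group G] : Prop := derivedSeries G 2 = ⊥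

/-!
Let `ω` be a primitive cube root of unity, `π = ω - 1`, and `A = ℤ[ω]/(π⁷)`, a group of order `3⁷`
with an `ω`-invariant alternating form valued in `ℤ/27`. Take the semidirect product of the
Heisenberg group of this form with a cyclic group `⟨x⟩`, where `x` acts as `ω`, and identify the
central generator `c` with the product of `27 ∈ A` and an element `τ` of `⟨x⟩`. With `y = 1 ∈ A`,
commutation with `x` is multiplication by `π`, so the power relations come from `3 = 2π² + π³`,
while `t₃ = c² = 27² · τ²` in multiplicative notation, with `s₇ = π⁶ = 2 · 27` in `A`.

The form takes values divisible by `3` on `πA`, and therefore the second derived subgroup is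
generated by `c³ = τ³`. If `x` has order `3 ^ (e + 1)`, then `τ³ = 1` and we obtain `M`; if `x` has
order `3 ^ (e + 3)`, then `τ³` has order `9` and we obtain `G`, with `G/G'' ≅ M` induced by reducing
the order of `x`. Complex conjugation composed with inversion gives the σ-automorphism.
-/

open Multiplicative AddSubgroup
open scoped commutatorElement

section Generalities

variable {G : Type*} [Group G]

theorem comm'_eq_commutatorElement (a b : G) : comm' a b = ⁅a⁻¹, b⁻¹⁆ := by
  simp [comm', commutatorElement_def]

theorem comm'_mem {S : Subgroup G} {a b : G} (ha : a ∈ S) (hb : b ∈ S) : comm' a b ∈ S :=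
  mul_mem (mul_mem (mul_mem (inv_mem ha) (inv_mem hb)) ha) hb

theorem comm'_mem_commutator {H K : Subgroup G} {a b : G} (ha : a ∈ H) (hb : b ∈ K) :
    comm' a b ∈ ⁅H, K⁆ := by
  rw [comm'_eq_commutatorElement]
  exact Subgroup.commutator_mem_commutator (inv_mem ha) (inv_mem hb)

theorem commutator_le_of_comm'_mem {H K S : Subgroup G}
    (h : ∀ a ∈ H, ∀ b ∈ K, comm' a b ∈ S) : ⁅H, K⁆ ≤ S := by
  refine Subgroup.commutator_le.2 fun a ha b hb => ?_
  simpa only [comm'_eq_commutatorElement, inv_inv] using h a⁻¹ (inv_mem ha) b⁻¹ (inv_mem hb)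

theorem comm'_eq_of_mul_eq {a b c : G} (h : a * b = b * (a * c)) : comm' a b = c := by
  rw [comm', mul_assoc, h]
  group

theorem nonempty_abelianization_mulEquiv_of_ker_eq {B : Type*} [CommGroup B] {f : G →* B}
    (hf : Function.Surjective f) (hker : f.ker = commutator G) :
    Nonempty (Abelianization G ≃* B) :=
  ⟨(QuotientGroup.quotientMulEquivOfEq hker.symm).trans
    (QuotientGroup.quotientKerEquivOfSurjective f hf)⟩

theorem isSigmaGroup_of_map_eq_inv {B : Type*} [CommGroup B] {f : G →* B} {σ : G ≃* G}
    (hker : f.ker = commutator G) (h : ∀ g, f (σ g) = (f g)⁻¹) : IsSigmaGroup G := by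
  refine ⟨σ, fun g => ?_⟩
  rw [eq_inv_iff_mul_eq_one, ← map_mul, ← MonoidHom.mem_ker, Abelianization.ker_of, ← hker,
    MonoidHom.mem_ker, map_mul, h, inv_mul_cancel]

/-- The homomorphism `ZMod n → B` sending `1` to a given element `b` killed by `n`. -/
def zmodHom {B : Type*} [AddGroup B] (n : ℕ) (b : B) (h : n • b = 0) : ZMod n →+ B :=
  ZMod.lift n ⟨zmultiplesHom B b, by simpa using h⟩

theorem zmodHom_intCast {B : Type*} [AddGroup B] {n : ℕ} {b : B} (h : n • b = 0) (z : ℤ) :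
    zmodHom n b h z = z • b := by
  simp [zmodHom]

/-- Reduction modulo a divisor, as an additive homomorphism. -/
def zmodReduce {m n : ℕ} (h : m ∣ n) : ZMod n →+ ZMod m := (ZMod.castHom h (ZMod m)).toAddMonoidHom

theorem zmodReduce_intCast {m n : ℕ} (h : m ∣ n) (z : ℤ) : zmodReduce h z = z :=
  map_intCast (ZMod.castHom h (ZMod m)) z

theorem zmodReduce_natCast {m n : ℕ} (h : m ∣ n) (k : ℕ) : zmodReduce h k = k :=
  map_natCast (ZMod.castHom h (ZMod m)) k

theorem zmodReduce_zmodReduce {k m n : ℕ} (h : k ∣ m) (h' : m ∣ n) (a : ZMod n) :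
    zmodReduce h (zmodReduce h' a) = zmodReduce (h.trans h') a := by
  obtain ⟨z, rfl⟩ := ZMod.intCast_surjective a
  simp only [zmodReduce_intCast]

theorem zmodReduce_surjective {m n : ℕ} (h : m ∣ n) : Function.Surjective (zmodReduce h) :=
  ZMod.castHom_surjective h

theorem ker_zmodReduce {m n : ℕ} (h : m ∣ n) : (zmodReduce h).ker = zmultiples (m : ZMod n) := by
  refine le_antisymm (fun a ha => ?_) ?_
  · obtain ⟨z, rfl⟩ := ZMod.intCast_surjective a
    rw [AddMonoidHom.mem_ker, zmodReduce_intCast, ZMod.intCast_zmod_eq_zero_iff_dvd] at ha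
    obtain ⟨k, rfl⟩ := ha
    exact mem_zmultiples_iff.2 ⟨k, by rw [zsmul_eq_mul]; push_cast; ring⟩
  · rw [zmultiples_le, AddMonoidHom.mem_ker, zmodReduce_natCast, ZMod.natCast_self]

theorem zmultiples_mul_eq_of_isUnit {n : ℕ} {c : ZMod n} (hc : IsUnit c) (a : ZMod n) :
    zmultiples (c * a) = zmultiples a := by
  have mul_mem (b d : ZMod n) : b * d ∈ zmultiples d := by
    obtain ⟨z, rfl⟩ := ZMod.intCast_surjective b
    exact mem_zmultiples_iff.2 ⟨z, zsmul_eq_mul d z⟩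
  refine le_antisymm (zmultiples_le_of_mem (mul_mem c a)) (zmultiples_le_of_mem ?_)
  obtain ⟨b, hb⟩ := hc.exists_left_inv
  simpa only [← mul_assoc, hb, one_mul] using mul_mem b (c * a)

theorem ker_zmodReduce_of_coprime {c m n : ℕ} (h : m ∣ n) (hc : c.Coprime n) :
    (zmodReduce h).ker = zmultiples ((c * m : ℕ) : ZMod n) := by
  rw [Nat.cast_mul, zmultiples_mul_eq_of_isUnit ((ZMod.isUnit_iff_coprime c n).2 hc),
    ker_zmodReduce]

end Generalities

/-- Gluing data on additive groups `A`, `C`, `L`: an action of `L` on `A`, an invariant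
alternating form on `A` with values in `C`, and maps `fiber`, `base` from `C` to `A` and `L` with
images acting trivially and lying in the radical of the form. They are the input for the group
`Gluing.Glued`. -/
structure Gluing (A C L : Type*) [AddCommGroup A] [AddCommGroup C] [AddCommGroup L] where
  act : L → AddMonoid.End A
  form : A →+ A →+ C
  fiber : C →+ A
  base : C →+ L
  act_zero (a : A) : act 0 a = a
  act_add (k l : L) (a : A) : act (k + l) a = act k (act l a)
  act_base (c : C) (a : A) : act (base c) a = a
  act_fiber (l : L) (c : C) : act l (fiber c) = fiber c
  form_self (a : A) : form a a = 0
  form_act (l : L) (a b : A) : form (act l a) (act l b) = form a b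
  form_fiber (a : A) (c : C) : form a (fiber c) = 0

namespace Gluing

variable {A C L A' C' L' : Type*} [AddCommGroup A] [AddCommGroup C] [AddCommGroup L]
  [AddCommGroup A'] [AddCommGroup C'] [AddCommGroup L']

/-- The group obtained from the semidirect product of the Heisenberg group on `A × C` with `L` by
identifying each central element `c` of `C` with `(fiber c, base c)`. Every element has a unique
representative with trivial `C`-coordinate, so the underlying set is `A × L`. -/
@[ext]
structure Glued (T : Gluing A C L) where
  left : A
  right : L

variable (T : Gluing A C L)

theorem form_swap (a b : A) : T.form b a = -T.form a b := by
  have h := T.form_self (a + b)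
  simp only [map_add, AddMonoidHom.add_apply, T.form_self, zero_add, add_zero] at h
  exact eq_neg_of_add_eq_zero_left h

theorem fiber_form (c : C) (a : A) : T.form (T.fiber c) a = 0 := by
  rw [T.form_swap a, T.form_fiber, neg_zero]

instance : Mul T.Glued where
  mul g h := ⟨g.left + T.act g.right h.left + T.fiber (T.form g.left (T.act g.right h.left)),
    g.right + h.right + T.base (T.form g.left (T.act g.right h.left))⟩

instance : One T.Glued := ⟨⟨0, 0⟩⟩

instance : Inv T.Glued := ⟨fun g => ⟨-T.act (-g.right) g.left, -g.right⟩⟩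

variable {T}

theorem one_def : (1 : T.Glued) = ⟨0, 0⟩ := rfl

theorem inv_def (g : T.Glued) : g⁻¹ = ⟨-T.act (-g.right) g.left, -g.right⟩ := rfl

theorem mul_def (g h : T.Glued) :
    g * h = ⟨g.left + T.act g.right h.left + T.fiber (T.form g.left (T.act g.right h.left)),
      g.right + h.right + T.base (T.form g.left (T.act g.right h.left))⟩ := rfl

instance : Group T.Glued where
  mul_assoc g h k := by
    ext <;>
    · simp only [mul_def, map_add, AddMonoidHom.add_apply, T.act_add, T.act_base, T.act_fiber,
        T.form_act, T.form_fiber, T.fiber_form, add_zero]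
      abel
  one_mul g := by simp [mul_def, one_def, T.act_zero]
  mul_one g := by simp [mul_def, one_def]
  inv_mul_cancel g := by simp [mul_def, one_def, inv_def, T.form_self]

variable (T) in
/-- The underlying set of the glued group, as a product. -/
def gluedEquiv : T.Glued ≃ A × L where
  toFun g := (g.left, g.right)
  invFun p := ⟨p.1, p.2⟩

theorem natCard_glued : Nat.card T.Glued = Nat.card A * Nat.card L := by
  rw [Nat.card_congr T.gluedEquiv, Nat.card_prod]

instance [Finite A] [Finite L] : Finite T.Glued := .of_equiv _ T.gluedEquiv.symm

variable (T) in
/-- The complement `L` of `A` in the glued group. -/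
def inr : Multiplicative L →* T.Glued where
  toFun l := ⟨0, l.toAdd⟩
  map_one' := rfl
  map_mul' k l := by simp [mul_def]

variable (T) in
/-- The central copy of `C`, along which `A` and `L` are glued. -/
def glue : Multiplicative C →* T.Glued where
  toFun c := ⟨T.fiber c.toAdd, T.base c.toAdd⟩
  map_one' := by simp [one_def]
  map_mul' c d := by simp [mul_def, T.act_base, T.form_fiber]

theorem inr_ofAdd (l : L) : T.inr (ofAdd l) = ⟨0, l⟩ := rfl

theorem glue_ofAdd (c : C) : T.glue (ofAdd c) = ⟨T.fiber c, T.base c⟩ := rfl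

theorem mk_mul_inr (a : A) (k l : L) :
    (⟨a, k⟩ * T.inr (ofAdd l) : T.Glued) = ⟨a, k + l⟩ := by
  simp [mul_def, inr_ofAdd]

theorem inr_mul_mk (k : L) (a : A) (l : L) :
    (T.inr (ofAdd k) * ⟨a, l⟩ : T.Glued) = ⟨T.act k a, k + l⟩ := by
  simp [mul_def, inr_ofAdd]

theorem mk_mul_glue (a : A) (l : L) (c : C) :
    (⟨a, l⟩ * T.glue (ofAdd c) : T.Glued) = ⟨a + T.fiber c, l + T.base c⟩ := by
  simp [mul_def, glue_ofAdd, T.act_fiber, T.form_fiber]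

theorem mk_mul_mk {l : L} (hl : ∀ a, T.act l a = a) (a b : A) (k : L) :
    (⟨a, l⟩ * ⟨b, k⟩ : T.Glued) = ⟨a + b, l + k⟩ * T.glue (ofAdd (T.form a b)) := by
  rw [mk_mul_glue]
  simp [mul_def, hl]

theorem mk_pow {l : L} (hl : ∀ a, T.act l a = a) (a : A) (n : ℕ) :
    (⟨a, l⟩ ^ n : T.Glued) = ⟨n • a, n • l⟩ := by
  induction n with
  | zero => simp [one_def]
  | succ n ih =>
    rw [pow_succ', ih, mk_mul_mk hl, map_nsmul, T.form_self, nsmul_zero, ofAdd_zero, map_one,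
      mul_one, succ_nsmul', succ_nsmul']

theorem comm'_mk_mk {l k : L} (hl : ∀ a, T.act l a = a) (hk : ∀ a, T.act k a = a) (a b : A) :
    comm' (⟨a, l⟩ : T.Glued) ⟨b, k⟩ = T.glue (ofAdd (2 • T.form a b)) := by
  apply comm'_eq_of_mul_eq
  rw [← mul_assoc, mk_mul_mk hl, mk_mul_mk hk, T.form_swap, mul_assoc, ← map_mul, ← ofAdd_add,
    add_comm b, add_comm k]
  congr 3
  abel

theorem comm'_mk_inr {l : L} (hl : ∀ a, T.act l a = a) (a : A) (k : L) :
    comm' (⟨a, l⟩ : T.Glued) (T.inr (ofAdd k)) =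
      ⟨T.act (-k) a - a, 0⟩ * T.glue (ofAdd (T.form (T.act (-k) a) a)) := by
  apply comm'_eq_of_mul_eq
  have hact : T.act k (T.act (-k) a) = a := by
    rw [← T.act_add, add_neg_cancel, T.act_zero]
  rw [mk_mul_inr, ← mul_assoc (⟨a, l⟩ : T.Glued), mk_mul_mk hl, map_sub, T.form_self, sub_zero,
    mul_assoc, ← map_mul, ← ofAdd_add, T.form_swap a, add_neg_cancel, ofAdd_zero, map_one, mul_one,
    add_sub_cancel, inr_mul_mk, hact, add_zero, add_comm]

theorem mem_zpowers_inr {l : L} {g : T.Glued} :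
    g ∈ Subgroup.zpowers (T.inr (ofAdd l)) ↔ g.left = 0 ∧ g.right ∈ zmultiples l := by
  constructor
  · rintro ⟨z, rfl⟩
    simp only [← map_zpow, ← ofAdd_zsmul]
    exact ⟨rfl, z, rfl⟩
  · obtain ⟨a, l⟩ := g
    rintro ⟨rfl, z, rfl⟩
    refine ⟨z, ?_⟩
    simp only [← map_zpow, ← ofAdd_zsmul]
    rfl

/-- The elements of `A` lying in a subgroup `S` that contains the central copy of `C`; modulo `C`
the group law on `A` is addition. -/
def leftPart (S : Subgroup T.Glued) (hS : ∀ c, T.glue c ∈ S) : AddSubgroup A where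
  carrier := {a | (⟨a, 0⟩ : T.Glued) ∈ S}
  zero_mem' := one_mem S
  add_mem' {a b} ha hb := by
    have h := S.mul_mem ha hb
    rwa [mk_mul_mk T.act_zero, Subgroup.mul_mem_cancel_right _ (hS _), add_zero] at h
  neg_mem' {a} ha := by
    have h := S.inv_mem ha
    simpa [inv_def, T.act_zero] using h

theorem mem_leftPart {S : Subgroup T.Glued} {hS : ∀ c, T.glue c ∈ S} {a : A} :
    a ∈ leftPart S hS ↔ (⟨a, 0⟩ : T.Glued) ∈ S := Iff.rfl

theorem act_neg_sub_mem_leftPart {S : Subgroup T.Glued} (hS : ∀ c, T.glue c ∈ S) {a : A} {k : L}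
    (h : comm' (⟨a, 0⟩ : T.Glued) (T.inr (ofAdd k)) ∈ S) :
    T.act (-k) a - a ∈ leftPart S hS := by
  rwa [comm'_mk_inr T.act_zero, Subgroup.mul_mem_cancel_right _ (hS _)] at h

/-- Functoriality of the glued group in the gluing data. -/
def map {T' : Gluing A' C' L'} (α : A →+ A') (γ : C → C') (ψ : L →+ L')
    (hact : ∀ l a, α (T.act l a) = T'.act (ψ l) (α a))
    (hform : ∀ a b, γ (T.form a b) = T'.form (α a) (α b))
    (hfiber : ∀ c, α (T.fiber c) = T'.fiber (γ c))
    (hbase : ∀ c, ψ (T.base c) = T'.base (γ c)) : T.Glued →* T'.Glued where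
  toFun g := ⟨α g.left, ψ g.right⟩
  map_one' := by simp [one_def]
  map_mul' g h := by simp [mul_def, hact, hform, hfiber, hbase]

end Gluing

/-- The additive group of `ℤ[ω]/(π⁷)`, where `ω` is a primitive cube root of unity and
`π = ω - 1`, in coordinates with respect to the basis `1, π`. -/
abbrev Eis : Type := ZMod 81 × ZMod 27

namespace Eis

/-- The reduction `ℤ/81 → ℤ/27`. -/
def red : ZMod 81 →+ ZMod 27 := zmodReduce (by norm_num)

/-- Multiplication by `3` as a map `ℤ/27 → ℤ/81`. -/
def three : ZMod 27 →+ ZMod 81 := zmodHom 27 3 (by decide)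

theorem three_intCast (z : ℤ) : three z = z • 3 := zmodHom_intCast _ z

theorem red_three (m : ZMod 27) : red (three m) = 3 • m := by
  obtain ⟨z, rfl⟩ := ZMod.intCast_surjective m
  have h : red 3 = 3 := rfl
  rw [three_intCast, map_zsmul, h]
  simp [mul_comm]

theorem three_red (n : ZMod 81) : three (red n) = 3 • n := by
  obtain ⟨z, rfl⟩ := ZMod.intCast_surjective n
  simp [red, zmodReduce_intCast, three_intCast, mul_comm]

/-- Multiplication by the uniformizer `π`, using `π² = -3 - 3π`. -/
def pi : AddMonoid.End Eis :=
  AddMonoidHom.mk' (fun a => (-three a.2, red a.1 - 3 • a.2)) fun a b => by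
    ext <;> simp only [Prod.fst_add, Prod.snd_add, map_add] <;> abel

/-- Multiplication by the cube root of unity `ω = 1 + π`. -/
def omega : AddMonoid.End Eis := 1 + pi

/-- Complex conjugation, which maps `π` to `-3 - π`. -/
def conj : Eis →+ Eis :=
  AddMonoidHom.mk' (fun a => (a.1 - three a.2, -a.2)) fun a b => by
    ext <;> simp only [Prod.fst_add, Prod.snd_add, map_add] <;> abel

/-- The alternating form `(a₁ + a₂π, b₁ + b₂π) ↦ a₂b₁ - a₁b₂`. -/
def form : Eis →+ Eis →+ ZMod 27 :=
  AddMonoidHom.mk' (fun a => AddMonoidHom.mk' (fun b => a.2 * red b.1 - red a.1 * b.2)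
    fun b c => by simp only [Prod.fst_add, Prod.snd_add, map_add]; ring)
    fun a b => by
      ext c
      simp only [Prod.fst_add, Prod.snd_add, map_add, AddMonoidHom.mk'_apply,
        AddMonoidHom.add_apply]
      ring

/-- The map `c ↦ 27c`, whose image is the socle of `ℤ[ω]/(π⁷)`. -/
def socle : ZMod 27 →+ Eis := (AddMonoidHom.inl _ _).comp (9 • three)

/-- The residue class modulo `π`, that is, the first coordinate modulo `3`. -/
def residue : Eis →+ ZMod 3 :=
  (zmodReduce (by norm_num)).comp (AddMonoidHom.fst _ _)

theorem pi_apply (a : Eis) : pi a = (-three a.2, red a.1 - 3 • a.2) := rfl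

theorem pi_pow_succ_apply (n : ℕ) (a : Eis) : (pi ^ (n + 1)) a = pi ((pi ^ n) a) := by
  rw [pow_succ']
  rfl

theorem omega_apply (a : Eis) : omega a = a + pi a := rfl

theorem conj_apply (a : Eis) : conj a = (a.1 - three a.2, -a.2) := rfl

theorem form_apply (a b : Eis) : form a b = a.2 * red b.1 - red a.1 * b.2 := rfl

theorem socle_apply (c : ZMod 27) : socle c = (9 • three c, 0) := rfl

theorem three_nsmul_eq (a : Eis) : 3 • a = 2 • (pi ^ 2) a + (pi ^ 3) a := by
  change _ = 2 • pi (pi a) + pi (pi (pi a))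
  ext <;> simp only [pi_apply, Prod.fst_add, Prod.snd_add, Prod.smul_mk, Prod.smul_fst,
    Prod.smul_snd, map_sub, map_neg, map_nsmul, red_three, three_red] <;> abel

theorem omega_pow_three : omega ^ 3 = 1 := by
  ext1 a
  change omega (omega (omega a)) = a
  ext <;> simp only [omega_apply, pi_apply, Prod.fst_add, Prod.snd_add, map_add, map_sub, map_neg,
    map_nsmul, red_three, three_red] <;> abel

theorem form_self (a : Eis) : form a a = 0 := by
  rw [form_apply]
  ring

theorem form_pi (a b : Eis) : form (pi a) (pi b) = 3 • form a b := by
  simp only [form_apply, pi_apply, map_neg, red_three, nsmul_eq_mul]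
  ring

theorem form_omega (a b : Eis) : form (omega a) (omega b) = form a b := by
  rw [form_apply, form_apply]
  simp only [omega_apply, pi_apply, Prod.fst_add, Prod.snd_add, map_add, map_neg, red_three,
    nsmul_eq_mul]
  ring

theorem form_conj (a b : Eis) : form (conj a) (conj b) = -form a b := by
  simp only [form_apply, conj_apply, map_sub, red_three, nsmul_eq_mul]
  ring

theorem conj_conj (a : Eis) : conj (conj a) = a := by
  simp [conj_apply]

theorem conj_omega (a : Eis) : conj (omega a) = (omega ^ 2) (conj a) := by
  change _ = omega (omega (conj a))
  ext <;> simp only [conj_apply, omega_apply, pi_apply, Prod.fst_add, Prod.snd_add, map_add,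
    map_sub, map_neg, map_nsmul, red_three, three_red] <;> abel

theorem red_socle (c : ZMod 27) : red (socle c).1 = 0 := by
  rw [socle_apply, map_nsmul, red_three, smul_smul]
  exact ZModModule.char_nsmul_eq_zero 27 c

theorem pi_socle (c : ZMod 27) : pi (socle c) = 0 := by
  rw [pi_apply, red_socle]
  simp [socle_apply]

theorem omega_socle (c : ZMod 27) : omega (socle c) = socle c := by
  rw [omega_apply, pi_socle, add_zero]

theorem conj_socle (c : ZMod 27) : conj (socle c) = socle c := by
  simp [conj_apply, socle_apply]

theorem form_socle (a : Eis) (c : ZMod 27) : form a (socle c) = 0 := by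
  rw [form_apply, red_socle]
  simp [socle_apply]

theorem residue_apply (a : Eis) : residue a = zmodReduce (by norm_num) a.1 := rfl

theorem residue_surjective : Function.Surjective residue :=
  (zmodReduce_surjective (by norm_num : 3 ∣ 81)).comp Prod.fst_surjective

theorem residue_three (m n : ZMod 27) : residue (three m, n) = 0 := by
  obtain ⟨z, rfl⟩ := ZMod.intCast_surjective m
  rw [residue_apply, three_intCast, map_zsmul]
  exact zsmul_zero z

theorem residue_eq_zero_iff {a : Eis} : residue a = 0 ↔ ∃ b, pi b = a := by
  constructor
  · obtain ⟨n, m⟩ := a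
    intro h
    obtain ⟨k, rfl⟩ := (ker_zmodReduce (by norm_num : 3 ∣ 81)).le h
    obtain ⟨p, hp⟩ := zmodReduce_surjective (by norm_num : 27 ∣ 81) (m - 3 • (k : ZMod 27))
    refine ⟨(p, ((-k : ℤ) : ZMod 27)), Prod.ext ?_ ?_⟩
    · simp [pi_apply, three_intCast]
    · simp [pi_apply, red, hp]
  · rintro ⟨b, rfl⟩
    rw [pi_apply, ← map_neg, residue_three]

theorem residue_omega (a : Eis) : residue (omega a) = residue a := by
  rw [omega_apply, map_add, residue_eq_zero_iff.2 ⟨a, rfl⟩, add_zero]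

theorem residue_conj (a : Eis) : residue (conj a) = residue a := by
  have h : conj a = a - (three a.2, 2 • a.2) := by
    ext
    · rfl
    · simp only [conj_apply, Prod.snd_sub]
      abel
  rw [h, map_sub, residue_three, sub_zero]

theorem residue_socle (c : ZMod 27) : residue (socle c) = 0 := by
  rw [socle_apply, ← map_nsmul, residue_three]

theorem eq_top_of_mem {S : AddSubgroup Eis} (hone : (1, 0) ∈ S) (hpi : pi (1, 0) ∈ S) :
    S = ⊤ := by
  refine eq_top_iff.2 fun ⟨n, m⟩ _ => ?_
  obtain ⟨z, rfl⟩ := ZMod.intCast_surjective n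
  obtain ⟨w, rfl⟩ := ZMod.intCast_surjective m
  have hred : red 1 = 1 := rfl
  simpa [pi_apply, hred] using add_mem (zsmul_mem hone z) (zsmul_mem hpi w)

theorem three_nsmul_socle (c : ZMod 27) : 3 • socle c = 0 := by
  rw [← map_nsmul, socle_apply, ← map_nsmul, smul_smul, ZModModule.char_nsmul_eq_zero, map_zero]
  rfl

-- `27 = π(-9π)` modulo `π⁷`, as `π² = -3 - 3π` and `27π = 0`.
theorem pi_one_neg_nine : pi (1, -9) = pi (1, 0) + socle 1 := by
  decide

theorem pi_pi_one_neg_nine : pi (pi (1, -9)) = (pi ^ 2) (1, 0) := by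
  decide

theorem pi_pow_six_one : (pi ^ 6) (1, 0) = 2 • socle 1 := by
  decide

theorem omega_pow_congr {m n : ℕ} (h : m ≡ n [MOD 3]) : omega ^ m = omega ^ n := by
  rw [pow_eq_pow_mod m omega_pow_three, pow_eq_pow_mod n omega_pow_three, h]

/-- The power `ω ^ k` for an exponent `k` modulo `3`. -/
def rot (k : ZMod 3) : AddMonoid.End Eis := omega ^ k.val

theorem rot_zero (a : Eis) : rot 0 a = a := rfl

theorem rot_one (a : Eis) : rot 1 a = omega a := rfl

theorem rot_add (k l : ZMod 3) (a : Eis) : rot (k + l) a = rot k (rot l a) := by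
  have h : rot (k + l) = rot k * rot l := by
    rw [rot, rot, rot, ← pow_add]
    refine omega_pow_congr ?_
    rw [ZMod.val_add]
    exact Nat.mod_modEq _ _
  rw [h]
  rfl

theorem rot_induction {P : AddMonoid.End Eis → Prop} (one : P 1)
    (omega_mul : ∀ f, P f → P (omega * f)) (k : ZMod 3) : P (rot k) := by
  rw [rot]
  induction k.val with
  | zero => exact one
  | succ n ih => exact pow_succ' omega n ▸ omega_mul _ ih

theorem form_rot (k : ZMod 3) (a b : Eis) : form (rot k a) (rot k b) = form a b :=
  rot_induction (P := fun f => form (f a) (f b) = form a b) rfl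
    (fun _ hf => (form_omega _ _).trans hf) k

theorem rot_socle (k : ZMod 3) (c : ZMod 27) : rot k (socle c) = socle c :=
  rot_induction (P := fun f => f (socle c) = socle c) rfl
    (fun _ hf => (congrArg omega hf).trans (omega_socle c)) k

theorem residue_rot (k : ZMod 3) (a : Eis) : residue (rot k a) = residue a :=
  rot_induction (P := fun f => residue (f a) = residue a) rfl
    (fun _ hf => (residue_omega _).trans hf) k

theorem conj_rot (k : ZMod 3) (a : Eis) : conj (rot k a) = rot (-k) (conj a) := by
  have conj_pow (n : ℕ) : conj ((omega ^ n) a) = (omega ^ (2 * n)) (conj a) := by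
    induction n with
    | zero => rfl
    | succ n ih =>
      rw [pow_succ', mul_add_one, add_comm, pow_add]
      exact (conj_omega _).trans (congrArg (omega ^ 2 : AddMonoid.End Eis) ih)
  have hk : 2 * k.val ≡ (-k).val [MOD 3] := by
    revert k
    decide
  rw [rot, rot, conj_pow, omega_pow_congr hk]

end Eis

/-- Data on a cyclic group `L` with generator `gen` for gluing it to `Eis`: the character through
which `L` acts by cube roots of unity, and the element `twist` to be identified with `27 ∈ Eis`. -/
structure CyclicTop (L : Type*) [AddCommGroup L] where
  char : L →+ ZMod 3
  gen : L
  twist : L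
  char_gen : char gen = 1
  char_twist : char twist = 0
  twist_torsion : 27 • twist = 0
  zmultiples_gen : zmultiples gen = ⊤

namespace CyclicTop

open Gluing

variable {L L' Q : Type*} [AddCommGroup L] [AddCommGroup L'] [AddCommGroup Q]

theorem char_zsmul_twist (T : CyclicTop L) (z : ℤ) : T.char (z • T.twist) = 0 := by
  rw [map_zsmul, T.char_twist, zsmul_zero]

/-- The gluing of `Eis` and `L` along `ℤ/27`. The sign in the action makes `x⁻¹ a x = ω a`. -/
def gluing (T : CyclicTop L) : Gluing Eis (ZMod 27) L where
  act l := Eis.rot (-T.char l)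
  form := Eis.form
  fiber := Eis.socle
  base := zmodHom 27 T.twist T.twist_torsion
  act_zero a := by rw [map_zero, neg_zero, Eis.rot_zero]
  act_add k l a := by rw [map_add, neg_add, Eis.rot_add]
  act_base c a := by
    obtain ⟨z, rfl⟩ := ZMod.intCast_surjective c
    rw [zmodHom_intCast, T.char_zsmul_twist, neg_zero, Eis.rot_zero]
  act_fiber _ := Eis.rot_socle _
  form_self := Eis.form_self
  form_act _ := Eis.form_rot _
  form_fiber := Eis.form_socle

variable (T : CyclicTop L)

/-- The generator `x`, acting on `Eis` as `ω`. -/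
def x : T.gluing.Glued := T.gluing.inr (ofAdd T.gen)

/-- The generator `y`, corresponding to `1 ∈ Eis`. -/
def y : T.gluing.Glued := ⟨(1, 0), 0⟩

variable {T}

theorem act_eq_self {l : L} (hl : T.char l = 0) (a : Eis) : T.gluing.act l a = a := by
  change Eis.rot (-T.char l) a = a
  rw [hl, neg_zero, Eis.rot_zero]

theorem act_neg_gen (a : Eis) : T.gluing.act (-T.gen) a = Eis.omega a := by
  change Eis.rot (-T.char (-T.gen)) a = _
  rw [map_neg, neg_neg, T.char_gen, Eis.rot_one]

theorem base_intCast (z : ℤ) : T.gluing.base z = z • T.twist :=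
  zmodHom_intCast T.twist_torsion z

theorem base_one : T.gluing.base 1 = T.twist := by simpa using T.base_intCast 1

theorem x_pow (n : ℕ) : T.x ^ n = T.gluing.inr (ofAdd (n • T.gen)) := by
  rw [x, ← map_pow, ofAdd_nsmul]

theorem act_neg_gen_sub (a : Eis) : T.gluing.act (-T.gen) a - a = Eis.pi a := by
  rw [act_neg_gen, Eis.omega_apply, add_sub_cancel_left]

theorem comm'_mk_x {l : L} (hl : T.char l = 0) (a : Eis) :
    comm' ⟨a, l⟩ T.x = ⟨Eis.pi a, 0⟩ * T.gluing.glue (ofAdd (Eis.form (Eis.pi a) a)) := by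
  have h : Eis.form (Eis.omega a) a = Eis.form (Eis.pi a) a := by
    rw [Eis.omega_apply, map_add, AddMonoidHom.add_apply, Eis.form_self, zero_add]
  rw [x, comm'_mk_inr (act_eq_self hl), act_neg_gen_sub, act_neg_gen, ← h]
  rfl

theorem comm'_y_x : comm' T.y T.x = ⟨Eis.pi (1, -9), T.twist⟩ := by
  have h : Eis.form (Eis.pi (1, 0)) (1, 0) = 1 := by decide
  rw [y, comm'_mk_x (map_zero T.char), h, mk_mul_glue, base_one, zero_add, Eis.pi_one_neg_nine]
  rfl

theorem comm'_comm'_y_x_y : comm' (comm' T.y T.x) T.y = T.gluing.glue (ofAdd 2) := by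
  have h : 2 • Eis.form (Eis.pi (1, -9)) (1, 0) = 2 := by decide
  rw [comm'_y_x, y, comm'_mk_mk (act_eq_self T.char_twist) T.gluing.act_zero]
  exact congrArg (fun c => T.gluing.glue (ofAdd c)) h

theorem glue_mem_of_two {S : Subgroup T.gluing.Glued} (h : T.gluing.glue (ofAdd 2) ∈ S)
    (c : Multiplicative (ZMod 27)) : T.gluing.glue c ∈ S := by
  have hc : ∀ c : ZMod 27, c = (14 * c).val • 2 := by decide
  rw [← ofAdd_toAdd c, hc c.toAdd, ofAdd_nsmul, map_pow]
  exact pow_mem h _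

theorem closure_x_y : Subgroup.closure {T.x, T.y} = ⊤ := by
  set S := Subgroup.closure {T.x, T.y}
  have hx : T.x ∈ S := Subgroup.subset_closure (by simp)
  have hy : T.y ∈ S := Subgroup.subset_closure (by simp)
  have hglue : ∀ c, T.gluing.glue c ∈ S :=
    glue_mem_of_two (T.comm'_comm'_y_x_y ▸ comm'_mem (comm'_mem hy hx) hy)
  have hpi : Eis.pi (1, 0) ∈ leftPart S hglue :=
    T.act_neg_gen_sub (1, 0) ▸ act_neg_sub_mem_leftPart hglue (comm'_mem hy hx)
  have hleft : leftPart S hglue = ⊤ := Eis.eq_top_of_mem hy hpi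
  refine eq_top_iff.2 fun ⟨a, l⟩ _ => ?_
  obtain ⟨z, rfl⟩ := mem_zmultiples_iff.1 (T.zmultiples_gen ▸ mem_top l)
  have ha : (⟨a, 0⟩ : T.gluing.Glued) ∈ S := mem_leftPart.1 (hleft ▸ mem_top a)
  have hl : T.gluing.inr (ofAdd (z • T.gen)) ∈ S := by
    rw [ofAdd_zsmul, map_zpow]
    exact zpow_mem hx z
  rw [← zero_add (z • T.gen), ← mk_mul_inr]
  exact mul_mem ha hl

theorem natCard_glued : Nat.card T.gluing.Glued = 3 ^ 7 * Nat.card L := by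
  rw [Gluing.natCard_glued, Nat.card_prod, Nat.card_zmod, Nat.card_zmod]
  norm_num

/-- The homomorphism to an abelian group given by the residue on `Eis` and by `p` on `L`. -/
def ab (p : L →+ Q) (hp : p T.twist = 0) : T.gluing.Glued →* Multiplicative (Q × ZMod 3) where
  toFun g := ofAdd (p g.right, Eis.residue g.left)
  map_one' := by simp [one_def, ← ofAdd_zero]
  map_mul' g h := by
    have hact (l : L) (a : Eis) : Eis.residue (T.gluing.act l a) = Eis.residue a :=
      Eis.residue_rot _ a
    have hfiber (c : ZMod 27) : Eis.residue (T.gluing.fiber c) = 0 := Eis.residue_socle c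
    have hbase (c : ZMod 27) : p (T.gluing.base c) = 0 := by
      obtain ⟨z, rfl⟩ := ZMod.intCast_surjective c
      rw [base_intCast, map_zsmul, hp, zsmul_zero]
    simp [mul_def, hact, hfiber, hbase, ← ofAdd_add]

theorem ab_surjective {p : L →+ Q} {hp : p T.twist = 0} (h : Function.Surjective p) :
    Function.Surjective (ab p hp) := by
  rintro ⟨q, r⟩
  obtain ⟨l, rfl⟩ := h q
  obtain ⟨a, rfl⟩ := Eis.residue_surjective r
  exact ⟨⟨a, l⟩, rfl⟩

theorem mem_ker_ab {p : L →+ Q} {hp : p T.twist = 0} {g : T.gluing.Glued} :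
    g ∈ (ab p hp).ker ↔ g.right ∈ p.ker ∧ Eis.residue g.left = 0 :=
  Prod.ext_iff

theorem ker_ab {p : L →+ Q} {hp : p T.twist = 0} (h : p.ker = zmultiples T.twist) :
    (ab p hp).ker = commutator T.gluing.Glued := by
  refine le_antisymm (fun ⟨a, l⟩ hg => ?_) (Abelianization.commutator_subset_ker _)
  obtain ⟨hl, ha⟩ := mem_ker_ab.1 hg
  have hcomm (g g' : T.gluing.Glued) : comm' g g' ∈ commutator T.gluing.Glued :=
    comm'_mem_commutator (Subgroup.mem_top g) (Subgroup.mem_top g')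
  have hglue := glue_mem_of_two (T.comm'_comm'_y_x_y ▸ hcomm _ _)
  have hleft {a : Eis} (ha : Eis.residue a = 0) :
      (⟨a, 0⟩ : T.gluing.Glued) ∈ commutator T.gluing.Glued := by
    obtain ⟨b, rfl⟩ := Eis.residue_eq_zero_iff.1 ha
    exact T.act_neg_gen_sub b ▸ act_neg_sub_mem_leftPart hglue (hcomm _ T.x)
  have htwist : T.gluing.inr (ofAdd T.twist) ∈ commutator T.gluing.Glued := by
    refine (Subgroup.mul_mem_cancel_left _ (hleft (Eis.residue_socle 1))).1 ?_
    rw [mk_mul_inr, zero_add, ← base_one]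
    exact hglue (ofAdd 1)
  obtain ⟨z, rfl⟩ := mem_zmultiples_iff.1 (h ▸ hl : l ∈ zmultiples T.twist)
  rw [← zero_add (z • T.twist), ← mk_mul_inr, ofAdd_zsmul, map_zpow]
  exact mul_mem (hleft ha) (zpow_mem htwist z)

theorem apply_twist {p : L →+ Q} (h : p.ker = zmultiples T.twist) : p T.twist = 0 :=
  AddMonoidHom.mem_ker.1 (h ▸ mem_zmultiples T.twist)

theorem nonempty_abelianization_mulEquiv {p : L →+ Q} (hp : Function.Surjective p)
    (h : p.ker = zmultiples T.twist) :
    Nonempty (Abelianization T.gluing.Glued ≃* Multiplicative (Q × ZMod 3)) :=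
  nonempty_abelianization_mulEquiv_of_ker_eq (ab_surjective (hp := apply_twist h) hp) (ker_ab h)

theorem mem_commutator_iff {g : T.gluing.Glued} : g ∈ commutator T.gluing.Glued ↔
    g.right ∈ zmultiples T.twist ∧ Eis.residue g.left = 0 := by
  have hker := QuotientAddGroup.ker_mk' (zmultiples T.twist)
  rw [← ker_ab (hp := apply_twist hker) hker, mem_ker_ab, hker]

theorem glue_three_nsmul (z : ℤ) :
    T.gluing.glue (ofAdd (3 • (z : ZMod 27))) = T.gluing.inr (ofAdd (3 • T.twist)) ^ z := by
  rw [glue_ofAdd, ← map_zpow, ← ofAdd_zsmul, inr_ofAdd, map_nsmul, map_nsmul, base_intCast,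
    smul_comm]
  exact congrArg (Glued.mk · _) (Eis.three_nsmul_socle z)

theorem comm'_pi_pi {k l : L} (hk : T.char k = 0) (hl : T.char l = 0) {a b : Eis} {z : ℤ}
    (hz : (z : ZMod 27) = 2 • Eis.form a b) :
    comm' ⟨Eis.pi a, k⟩ ⟨Eis.pi b, l⟩ = T.gluing.inr (ofAdd (3 • T.twist)) ^ z := by
  have hform : 2 • Eis.form (Eis.pi a) (Eis.pi b) = 3 • (z : ZMod 27) := by
    rw [Eis.form_pi, smul_comm, hz]
  rw [comm'_mk_mk (act_eq_self hk) (act_eq_self hl), ← glue_three_nsmul, ← hform]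
  rfl

theorem derivedSeries_two : derivedSeries T.gluing.Glued 2 =
    Subgroup.zpowers (T.gluing.inr (ofAdd (3 • T.twist))) := by
  have char_eq_zero {k : L} (hk : k ∈ zmultiples T.twist) : T.char k = 0 := by
    obtain ⟨z, rfl⟩ := mem_zmultiples_iff.1 hk
    exact T.char_zsmul_twist z
  rw [derivedSeries_succ, derivedSeries_one]
  apply le_antisymm
  · refine commutator_le_of_comm'_mem fun ⟨a, k⟩ ha ⟨b, l⟩ hb => ?_
    obtain ⟨hk, ha⟩ := mem_commutator_iff.1 ha
    obtain ⟨hl, hb⟩ := mem_commutator_iff.1 hb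
    obtain ⟨a, rfl⟩ := Eis.residue_eq_zero_iff.1 ha
    obtain ⟨b, rfl⟩ := Eis.residue_eq_zero_iff.1 hb
    obtain ⟨z, hz⟩ := ZMod.intCast_surjective (2 • Eis.form a b)
    exact ⟨z, (comm'_pi_pi (char_eq_zero hk) (char_eq_zero hl) hz).symm⟩
  · rw [Subgroup.zpowers_le]
    have mem (a : Eis) : (⟨Eis.pi a, 0⟩ : T.gluing.Glued) ∈ commutator T.gluing.Glued :=
      mem_commutator_iff.2 ⟨zero_mem _, Eis.residue_eq_zero_iff.2 ⟨a, rfl⟩⟩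
    have h := comm'_pi_pi (T := T) (map_zero _) (map_zero _)
      (by decide : ((1 : ℤ) : ZMod 27) = 2 • Eis.form (0, 14) (1, 0))
    rw [zpow_one] at h
    exact h ▸ comm'_mem_commutator (mem _) (mem _)

theorem derivedSeries_three : derivedSeries T.gluing.Glued 3 = ⊥ := by
  rw [derivedSeries_succ, derivedSeries_two, Subgroup.commutator_eq_bot_iff_le_centralizer,
    Subgroup.le_centralizer_iff_isMulCommutative]
  exact Subgroup.zpowers_isMulCommutative _

theorem derivedSeries_two_eq_bot_iff :
    derivedSeries T.gluing.Glued 2 = ⊥ ↔ 3 • T.twist = 0 := by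
  rw [derivedSeries_two, Subgroup.zpowers_eq_bot, inr_ofAdd, one_def, Glued.mk.injEq]
  exact and_iff_right rfl

variable (T) in
/-- The automorphism inducing inversion on the abelianization: `-conj` on `Eis`, negation on `L`. -/
def sigma : T.gluing.Glued →* T.gluing.Glued :=
  Gluing.map (-Eis.conj) Neg.neg (-AddMonoidHom.id L)
    (fun l a => by
      change -Eis.conj (Eis.rot (-T.char l) a) = Eis.rot (-T.char (-l)) (-Eis.conj a)
      rw [Eis.conj_rot, map_neg, map_neg])
    (fun a b => by
      change -Eis.form a b = Eis.form (-Eis.conj a) (-Eis.conj b)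
      rw [map_neg, map_neg, AddMonoidHom.neg_apply, neg_neg, Eis.form_conj])
    (fun c => by
      change -Eis.conj (Eis.socle c) = Eis.socle (-c)
      rw [Eis.conj_socle, map_neg])
    (fun c => (map_neg T.gluing.base c).symm)

theorem sigma_mk (a : Eis) (l : L) : T.sigma ⟨a, l⟩ = ⟨-Eis.conj a, -l⟩ := rfl

theorem sigma_sigma (g : T.gluing.Glued) : T.sigma (T.sigma g) = g := by
  obtain ⟨a, l⟩ := g
  rw [sigma_mk, sigma_mk, map_neg, neg_neg, neg_neg, Eis.conj_conj]

theorem isSigmaGroup : IsSigmaGroup T.gluing.Glued := by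
  let σ := MulEquiv.ofBijective T.sigma (Function.Involutive.bijective sigma_sigma)
  have hker := QuotientAddGroup.ker_mk' (zmultiples T.twist)
  refine isSigmaGroup_of_map_eq_inv (σ := σ) (ker_ab (hp := apply_twist hker) hker) ?_
  rintro ⟨a, l⟩
  refine Prod.ext (map_neg _ l) ?_
  change Eis.residue (-Eis.conj a) = -Eis.residue a
  rw [map_neg, Eis.residue_conj]

variable (T) in
/-- The homomorphism induced by a map of cyclic tops. -/
def mapTop (T' : CyclicTop L') (ψ : L →+ L') (hchar : ∀ l, T'.char (ψ l) = T.char l)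
    (htwist : ψ T.twist = T'.twist) : T.gluing.Glued →* T'.gluing.Glued :=
  Gluing.map (AddMonoidHom.id Eis) id ψ
    (fun l a => by
      change Eis.rot (-T.char l) a = Eis.rot (-T'.char (ψ l)) a
      rw [hchar])
    (fun _ _ => rfl) (fun _ => rfl)
    (fun c => by
      obtain ⟨z, rfl⟩ := ZMod.intCast_surjective c
      rw [id, base_intCast, base_intCast, map_zsmul, htwist])

section mapTop

variable {T' : CyclicTop L'} {ψ : L →+ L'} {hchar : ∀ l, T'.char (ψ l) = T.char l}
  {htwist : ψ T.twist = T'.twist}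

theorem mapTop_surjective (h : Function.Surjective ψ) :
    Function.Surjective (mapTop T T' ψ hchar htwist) := by
  rintro ⟨a, l'⟩
  obtain ⟨l, rfl⟩ := h l'
  exact ⟨⟨a, l⟩, rfl⟩

theorem ker_mapTop (h : ψ.ker = zmultiples (3 • T.twist)) :
    (mapTop T T' ψ hchar htwist).ker = derivedSeries T.gluing.Glued 2 := by
  rw [derivedSeries_two]
  ext ⟨a, l⟩
  rw [mem_zpowers_inr, ← h]
  exact Glued.ext_iff

end mapTop

section Metabelian

theorem glue_three_nsmul_eq_one (h : 3 • T.twist = 0) (c : ZMod 27) :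
    T.gluing.glue (ofAdd (3 • c)) = 1 := by
  obtain ⟨z, rfl⟩ := ZMod.intCast_surjective c
  rw [glue_three_nsmul, h, ofAdd_zero, map_one, one_zpow]

theorem pi_mul_pi (h : 3 • T.twist = 0) {l : L} (hl : T.char l = 0) (a b : Eis) (k : L) :
    (⟨Eis.pi a, l⟩ * ⟨Eis.pi b, k⟩ : T.gluing.Glued) = ⟨Eis.pi (a + b), l + k⟩ := by
  rw [mk_mul_mk (act_eq_self hl), map_add]
  have : T.gluing.form (Eis.pi a) (Eis.pi b) = 3 • Eis.form a b := Eis.form_pi a b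
  rw [this, glue_three_nsmul_eq_one h, mul_one]

theorem comm'_pi_x (h : 3 • T.twist = 0) {l : L} (hl : T.char l = 0) (a : Eis) :
    comm' ⟨Eis.pi a, l⟩ T.x = ⟨Eis.pi (Eis.pi a), 0⟩ := by
  rw [comm'_mk_x hl, Eis.form_pi, glue_three_nsmul_eq_one h, mul_one]

theorem mk_pow_three (h : 3 • T.twist = 0) {l : L} (hl : T.char l = 0) (hl3 : 3 • l = 0)
    (a : Eis) :
    (⟨a, l⟩ ^ 3 : T.gluing.Glued) = ⟨(Eis.pi ^ 2) a, 0⟩ ^ 2 * ⟨(Eis.pi ^ 3) a, 0⟩ := by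
  have hsq : (⟨(Eis.pi ^ 2) a, 0⟩ ^ 2 : T.gluing.Glued) = ⟨Eis.pi (2 • Eis.pi a), 0⟩ := by
    rw [mk_pow T.gluing.act_zero, map_nsmul, nsmul_zero]
    rfl
  have hcube : Eis.pi (2 • Eis.pi a + (Eis.pi ^ 2) a) = 3 • a := by
    rw [map_add, map_nsmul, Eis.three_nsmul_eq]
    rfl
  rw [mk_pow (act_eq_self hl), hl3, hsq, ← hcube, ← add_zero (0 : L),
    ← pi_mul_pi h (map_zero _), add_zero]
  rfl

theorem sgen_add_three (h : 3 • T.twist = 0) (j : ℕ) :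
    sgen T.x T.y (j + 3) = ⟨(Eis.pi ^ (j + 2)) (1, 0), 0⟩ := by
  induction j with
  | zero => rw [sgen, sgen, comm'_y_x, comm'_pi_x h T.char_twist, Eis.pi_pi_one_neg_nine]
  | succ j ih =>
    rw [sgen, ih, Eis.pi_pow_succ_apply, comm'_pi_x h (map_zero _), ← Eis.pi_pow_succ_apply,
      ← Eis.pi_pow_succ_apply, add_right_comm]

theorem y_pow_three (h : 3 • T.twist = 0) : T.y ^ 3 = sgen T.x T.y 3 ^ 2 * sgen T.x T.y 4 := by
  rw [sgen_add_three h, sgen_add_three h]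
  exact mk_pow_three h (map_zero _) (nsmul_zero _) _

theorem sgen_two_pow_three (h : 3 • T.twist = 0) :
    sgen T.x T.y 2 ^ 3 = sgen T.x T.y 4 ^ 2 * sgen T.x T.y 5 := by
  have hpow (n : ℕ) : (Eis.pi ^ (n + 1)) (Eis.pi (1, -9)) = (Eis.pi ^ (n + 2)) (1, 0) := by
    rw [pow_succ, pow_add]
    exact congrArg (Eis.pi ^ n : AddMonoid.End Eis) Eis.pi_pi_one_neg_nine
  rw [sgen_add_three h, sgen_add_three h, sgen, comm'_y_x, mk_pow_three h T.char_twist h, hpow,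
    hpow]

theorem sgen_pow_three (h : 3 • T.twist = 0) (j : ℕ) :
    sgen T.x T.y (j + 3) ^ 3 = sgen T.x T.y (j + 5) ^ 2 * sgen T.x T.y (j + 6) := by
  have hpow (n : ℕ) : (Eis.pi ^ n) ((Eis.pi ^ (j + 2)) (1, 0)) = (Eis.pi ^ (j + n + 2)) (1, 0) := by
    rw [add_right_comm, add_comm (j + 2), pow_add Eis.pi n]
    rfl
  rw [sgen_add_three h, sgen_add_three h, sgen_add_three h,
    mk_pow_three h (map_zero _) (nsmul_zero _), hpow, hpow]

theorem sgen_eight (h : 3 • T.twist = 0) : sgen T.x T.y 8 = 1 := by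
  rw [sgen_add_three h]
  exact congrArg (Glued.mk · _) (by decide)

theorem tgenD_three (h : 3 • T.twist = 0) :
    tgenD T.x T.y 3 = sgen T.x T.y 7 * T.gluing.inr (ofAdd (2 • T.twist)) := by
  have htwo : T.gluing.base 2 = 2 • T.twist := by exact_mod_cast T.base_intCast 2
  rw [tgenD, sgen, comm'_comm'_y_x_y, sgen_add_three h, mk_mul_inr, glue_ofAdd, htwo, zero_add,
    Eis.pi_pow_six_one, ← map_nsmul]
  rfl

end Metabelian

end CyclicTop

/-- The cyclic group of order `3 ^ (e + k)` as a top. Its twist is chosen such that, for `k = 1`,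
twice the twist is `q * 3 ^ e`. -/
def primePowerTop {e k : ℕ} (q : ℕ) (he : e ≠ 0) (hk : k ≤ 3) :
    CyclicTop (ZMod (3 ^ (e + k))) where
  char := zmodReduce (dvd_pow_self 3 (by lia))
  gen := 1
  twist := ((2 * q * 3 ^ e : ℕ) : ZMod (3 ^ (e + k)))
  char_gen := map_one (ZMod.castHom (dvd_pow_self 3 (by lia : e + k ≠ 0)) (ZMod 3))
  char_twist := by
    rw [zmodReduce_natCast, ZMod.natCast_eq_zero_iff]
    exact (dvd_pow_self 3 he).mul_left _
  twist_torsion := by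
    rw [nsmul_eq_mul, ← Nat.cast_mul, ZMod.natCast_eq_zero_iff]
    have h : 3 ^ (e + k) ∣ 3 ^ (e + 3) := pow_dvd_pow 3 (by lia)
    exact h.trans ⟨2 * q, by ring⟩
  zmultiples_gen := eq_top_iff.2 fun a _ => by
    obtain ⟨z, rfl⟩ := ZMod.intCast_surjective a
    exact ⟨z, zsmul_one z⟩

namespace primePowerTop

open CyclicTop

variable {e q k : ℕ} {he : e ≠ 0} {hk : k ≤ 3}

theorem coprime_two_mul (hq : q.Coprime 3) (n : ℕ) : (2 * q).Coprime (3 ^ n) :=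
  (Nat.Coprime.mul_left (by norm_num) hq).pow_right n

theorem three_nsmul_twist : 3 • (primePowerTop q he hk).twist = (2 * q * 3 ^ (e + 1) : ℕ) := by
  rw [primePowerTop, nsmul_eq_mul, ← Nat.cast_mul]
  congr 1
  ring

theorem three_nsmul_twist_eq_zero_iff (hq : q.Coprime 3) :
    3 • (primePowerTop q he hk).twist = 0 ↔ k ≤ 1 := by
  rw [three_nsmul_twist, ZMod.natCast_eq_zero_iff, (coprime_two_mul hq _).symm.dvd_mul_left,
    Nat.pow_dvd_pow_iff_le_right (by norm_num), add_le_add_iff_left]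

theorem natCard_glued : Nat.card (primePowerTop q he hk).gluing.Glued = 3 ^ (7 + (e + k)) := by
  rw [CyclicTop.natCard_glued, Nat.card_zmod, ← pow_add]

theorem nonempty_abelianization_mulEquiv (hq : q.Coprime 3) :
    Nonempty (Abelianization (primePowerTop q he hk).gluing.Glued ≃*
      Multiplicative (ZMod (3 ^ e) × ZMod 3)) :=
  CyclicTop.nonempty_abelianization_mulEquiv
    (zmodReduce_surjective (pow_dvd_pow 3 (Nat.le_add_right e k)))
    (ker_zmodReduce_of_coprime _ (coprime_two_mul hq _))

theorem x_pow_pow (n : ℕ) :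
    ((primePowerTop q he hk).x ^ 3 ^ e) ^ n =
      (primePowerTop q he hk).gluing.inr (ofAdd ((3 ^ e * n : ℕ) : ZMod (3 ^ (e + k)))) := by
  rw [← pow_mul, CyclicTop.x_pow]
  exact congrArg (fun l => Gluing.inr _ (ofAdd l)) (nsmul_one (3 ^ e * n))

theorem x_pow_pow_three (hk' : k ≤ 1) : ((primePowerTop q he hk).x ^ 3 ^ e) ^ 3 = 1 := by
  have h : ((3 ^ e * 3 : ℕ) : ZMod (3 ^ (e + k))) = 0 :=
    (ZMod.natCast_eq_zero_iff _ _).2 (pow_dvd_pow 3 (Nat.add_le_add_left hk' e))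
  rw [x_pow_pow, h, ofAdd_zero, map_one]

theorem two_nsmul_twist (hk' : k ≤ 1) : 2 • (primePowerTop q he hk).twist = (3 ^ e * q : ℕ) := by
  have h : 2 * (2 * q * 3 ^ e) = 3 ^ e * q + q * 3 ^ (e + 1) := by ring
  have hzero : ((3 ^ (e + 1) : ℕ) : ZMod (3 ^ (e + k))) = 0 :=
    (ZMod.natCast_eq_zero_iff _ _).2 (pow_dvd_pow 3 (by lia))
  rw [primePowerTop, nsmul_eq_mul, ← Nat.cast_mul, h, Nat.cast_add, Nat.cast_mul q, hzero,
    mul_zero, add_zero]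

theorem tgenD_three (hq : q.Coprime 3) (hk' : k ≤ 1) :
    tgenD (primePowerTop q he hk).x (primePowerTop q he hk).y 3 =
      sgen (primePowerTop q he hk).x (primePowerTop q he hk).y 7 *
        ((primePowerTop q he hk).x ^ 3 ^ e) ^ q := by
  rw [CyclicTop.tgenD_three ((three_nsmul_twist_eq_zero_iff hq).2 hk'), two_nsmul_twist hk',
    x_pow_pow]

/-- The projection that reduces the order of the cyclic top. -/
def proj (q : ℕ) (he : e ≠ 0) (hk : k ≤ 3) {l : ℕ} (hl : l ≤ k) :
    (primePowerTop q he hk).gluing.Glued →* (primePowerTop q he (hl.trans hk)).gluing.Glued :=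
  mapTop _ _ (zmodReduce (pow_dvd_pow 3 (Nat.add_le_add_left hl e)))
    (zmodReduce_zmodReduce _ _) (zmodReduce_natCast _ _)

theorem proj_surjective {l : ℕ} (hl : l ≤ k) : Function.Surjective (proj q he hk hl) :=
  mapTop_surjective (zmodReduce_surjective _)

theorem ker_proj_one (hq : q.Coprime 3) (hk' : 1 ≤ k) :
    (proj q he hk hk').ker = derivedSeries _ 2 :=
  ker_mapTop (by rw [three_nsmul_twist, ker_zmodReduce_of_coprime _ (coprime_two_mul hq _)])

end primePowerTop

theorem stmt15_general (e q : ℕ) (he : e ≠ 0) (hq : q.Coprime 3) :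
    ∃ (M : Type) (_ : Group M) (_ : Finite M) (x y : M),
      Subgroup.closure {x, y} = ⊤ ∧
      Nat.card M = 3 ^ (8 + e) ∧
      IsMetabelian M ∧
      IsSigmaGroup M ∧
      (x ^ 3 ^ e) ^ 3 = 1 ∧
      y ^ 3 = sgen x y 3 ^ 2 * sgen x y 4 ∧
      sgen x y 2 ^ 3 = sgen x y 4 ^ 2 * sgen x y 5 ∧
      sgen x y 3 ^ 3 = sgen x y 5 ^ 2 * sgen x y 6 ∧
      sgen x y 4 ^ 3 = sgen x y 6 ^ 2 * sgen x y 7 ∧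
      sgen x y 5 ^ 3 = sgen x y 7 ^ 2 ∧
      tgenD x y 3 = sgen x y 7 * (x ^ 3 ^ e) ^ q ∧
      Nonempty (Abelianization M ≃* Multiplicative (ZMod (3 ^ e) × ZMod 3)) ∧
      ∃ (G : Type) (_ : Group G) (_ : Finite G),
        Nat.card G = 3 ^ (10 + e) ∧
        Nonempty (Abelianization G ≃* Multiplicative (ZMod (3 ^ e) × ZMod 3)) ∧
        IsSigmaGroup G ∧
        derivedSeries G 2 ≠ ⊥ ∧
        derivedSeries G 3 = ⊥ ∧
        ∃ φ : G →* M, Function.Surjective φ ∧ φ.ker = derivedSeries G 2 := by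
  let T := primePowerTop (k := 1) q he (by norm_num)
  let T' := primePowerTop (k := 3) q he le_rfl
  have h : 3 • T.twist = 0 := (primePowerTop.three_nsmul_twist_eq_zero_iff hq).2 le_rfl
  have h' : 3 • T'.twist ≠ 0 :=
    (primePowerTop.three_nsmul_twist_eq_zero_iff hq).not.2 (by norm_num)
  have hM : Nat.card T.gluing.Glued = 3 ^ (8 + e) := by
    rw [primePowerTop.natCard_glued, add_left_comm, add_comm]
  have hG : Nat.card T'.gluing.Glued = 3 ^ (10 + e) := by
    rw [primePowerTop.natCard_glued, add_left_comm, add_comm]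
  have hs₅ : sgen T.x T.y 5 ^ 3 = sgen T.x T.y 7 ^ 2 := by
    rw [T.sgen_pow_three h 2, T.sgen_eight h, mul_one]
  exact ⟨T.gluing.Glued, inferInstance, inferInstance, T.x, T.y, T.closure_x_y, hM,
    T.derivedSeries_two_eq_bot_iff.2 h, T.isSigmaGroup, primePowerTop.x_pow_pow_three le_rfl,
    T.y_pow_three h, T.sgen_two_pow_three h, T.sgen_pow_three h 0, T.sgen_pow_three h 1, hs₅,
    primePowerTop.tgenD_three hq le_rfl, primePowerTop.nonempty_abelianization_mulEquiv hq,
    T'.gluing.Glued, inferInstance, inferInstance, hG,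
    primePowerTop.nonempty_abelianization_mulEquiv hq, T'.isSigmaGroup,
    T'.derivedSeries_two_eq_bot_iff.not.2 h', T'.derivedSeries_three,
    primePowerTop.proj q he le_rfl (by norm_num), primePowerTop.proj_surjective _,
    primePowerTop.ker_proj_one hq _⟩

theorem stmt15 (e i : ℕ) (he : 7 ≤ e) (hi : i = 2 ∨ i = 3) :
    ∃ (M : Type) (_ : Group M) (_ : Finite M) (x y : M),
      Subgroup.closure {x, y} = ⊤ ∧
      Nat.card M = 3 ^ (8 + e) ∧
      IsMetabelian M ∧
      IsSigmaGroup M ∧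
      (x ^ 3 ^ e) ^ 3 = 1 ∧
      y ^ 3 = sgen x y 3 ^ 2 * sgen x y 4 ∧
      sgen x y 2 ^ 3 = sgen x y 4 ^ 2 * sgen x y 5 ∧
      sgen x y 3 ^ 3 = sgen x y 5 ^ 2 * sgen x y 6 ∧
      sgen x y 4 ^ 3 = sgen x y 6 ^ 2 * sgen x y 7 ∧
      sgen x y 5 ^ 3 = sgen x y 7 ^ 2 ∧
      tgenD x y 3 = sgen x y 7 * (x ^ 3 ^ e) ^ (i - 1) ∧
      Nonempty (Abelianization M ≃* Multiplicative (ZMod (3 ^ e) × ZMod 3)) ∧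
      ∃ (G : Type) (_ : Group G) (_ : Finite G),
        Nat.card G = 3 ^ (10 + e) ∧
        Nonempty (Abelianization G ≃* Multiplicative (ZMod (3 ^ e) × ZMod 3)) ∧
        IsSigmaGroup G ∧
        derivedSeries G 2 ≠ ⊥ ∧
        derivedSeries G 3 = ⊥ ∧
        ∃ φ : G →* M, Function.Surjective φ ∧ φ.ker = derivedSeries G 2 := by
  have hq : (i - 1).Coprime 3 := by rcases hi with rfl | rfl <;> norm_num
  exact stmt15_general e (i - 1) (by lia) hq
end

section
/- For every integer e ≥ 5 and each i ∈ {2,3}, there exists a finite metabelian σ-group M of order 3^{8+e}, generated by two elements x and y satisfying w^3 = 1, y^3 = s₃ s₄^2, s₂^3 = s₄ t₄^2 w^{i-1}, s₃^3 = s₅, t₃^3 = s₅^2 w^{2(i-1)}, [x^3, y] = s₄ t₄ s₅^2 w^{2(i-1)}, [x^3, s₂] = s₅, and t₅ = s₅ w^{i-1}, whose abelianization is isomorphic to (ZMod (3^e)) × (ZMod 3). -/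
/-!
`M_{e,i}` is built from below, as an extension of `ZMod (3 ^ e) × ZMod 3` by its derived subgroup.
The latter is abelian of order `3 ^ 7`, generated by `s₂`, `t₃`, `t₄` and `y ^ 3`, and the
relations determine how `x` and `y` act on it and which of its elements are `w`, `y ^ 3` and
`[y,x]`. One adjoins first `y` and then `x`, each as an `n`-th root of an element `c` already
present: in the semidirect product with an infinite cyclic group `⟨x⟩` the element `c⁻¹ * x ^ n` is
central, and it generates a subgroup meeting the base trivially, so dividing by it does not shrink
the base. The universal property of the result provides the endomorphism `σ` inverting `x` and `y`,
and each of the listed relations becomes an identity in the derived subgroup.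
-/

theorem isSigmaGroup_of_forall_eq_inv {G : Type*} [Group G] {S : Set G}
    (hS : Subgroup.closure S = ⊤) (σ : G →* G) (hσ : ∀ g ∈ S, σ g = g⁻¹) : IsSigmaGroup G := by
  have hσσ : σ.comp σ = MonoidHom.id G :=
    MonoidHom.eq_of_eqOn_dense hS fun g hg ↦ by simp [hσ g hg]
  have hof : Abelianization.of.comp σ = invMonoidHom.comp Abelianization.of :=
    MonoidHom.eq_of_eqOn_dense hS fun g hg ↦ by simp [hσ g hg]
  exact ⟨MonoidHom.toMulEquiv σ σ hσσ hσσ, DFunLike.congr_fun hof⟩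

theorem isMetabelian_of_commutator_le_range {G A : Type*} [Group G] [CommGroup A] (f : A →* G)
    (hf : commutator G ≤ f.range) : IsMetabelian G := by
  rw [IsMetabelian, derivedSeries_succ, derivedSeries_one,
    Subgroup.commutator_eq_bot_iff_le_centralizer]
  intro g hg
  rw [Subgroup.mem_centralizer_iff]
  intro h hh
  obtain ⟨a, rfl⟩ := hf hg
  obtain ⟨b, rfl⟩ := hf hh
  rw [← map_mul, mul_comm, map_mul]

theorem normalClosure_singleton_of_mem_center {G : Type*} [Group G] {z : G}
    (hz : z ∈ Subgroup.center G) : Subgroup.normalClosure {z} = Subgroup.zpowers z := by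
  have : (Subgroup.zpowers z).Normal := ⟨fun g hg h ↦ by
    rwa [Subgroup.mem_center_iff.1 (Subgroup.zpowers_le.2 hz hg), mul_inv_cancel_right]⟩
  exact le_antisymm
    (Subgroup.normalClosure_le_normal (Set.singleton_subset_iff.2 (Subgroup.mem_zpowers z)))
    (Subgroup.zpowers_le.2 (Subgroup.subset_normalClosure rfl))

theorem bijective_of_bijective_iterate {α : Type*} {f : α → α} {n : ℕ} (hn : n ≠ 0)
    (hf : Function.Bijective f^[n]) : Function.Bijective f := by
  obtain ⟨k, rfl⟩ := Nat.exists_eq_succ_of_ne_zero hn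
  exact ⟨(Function.iterate_succ f k ▸ hf.injective).of_comp,
    (Function.iterate_succ' f k ▸ hf.surjective).of_comp⟩

theorem pow_pow_self_eq_of_pow_three_eq_one {M : Type*} [Monoid M] {g : M} {d : ℕ} (hg : g ^ 3 = 1)
    (hd : ¬ 3 ∣ d) : (g ^ d) ^ d = g := by
  have hdd : d * d % 3 = 1 := by
    obtain h | h : d % 3 = 1 ∨ d % 3 = 2 := by omega
    all_goals simp [Nat.mul_mod, h]
  rw [← pow_mul, pow_eq_pow_mod _ hg, hdd, pow_one]

/-- The automorphism given by an endomorphism with a bijective power. -/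
noncomputable def autOfBijectivePow {G : Type*} [Group G] (f : Monoid.End G) {n : ℕ} (hn : n ≠ 0)
    (hf : Function.Bijective ⇑(f ^ n)) : MulAut G :=
  MulEquiv.ofBijective f (bijective_of_bijective_iterate hn hf)

theorem autOfBijectivePow_pow_apply {G : Type*} [Group G] {f : Monoid.End G} {n : ℕ} (hn : n ≠ 0)
    (hf : Function.Bijective ⇑(f ^ n)) (k : ℕ) (g : G) :
    (autOfBijectivePow f hn hf ^ k) g = (f ^ k) g :=
  congrFun (hom_coe_pow (fun τ : MulAut G ↦ ⇑τ) rfl (fun _ _ ↦ rfl) _ k) g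

/-- The automorphism given by an endomorphism of finite order. -/
noncomputable abbrev autOfPowEqOne {G : Type*} [Group G] (f : Monoid.End G) {n : ℕ} (hn : n ≠ 0)
    (hf : f ^ n = 1) : MulAut G :=
  autOfBijectivePow f hn (hf ▸ Function.bijective_id)

theorem autOfPowEqOne_pow {G : Type*} [Group G] {f : Monoid.End G} {n : ℕ} (hn : n ≠ 0)
    (hf : f ^ n = 1) : autOfPowEqOne f hn hf ^ n = 1 :=
  MulEquiv.ext fun g ↦
    (autOfBijectivePow_pow_apply hn _ n g).trans (DFunLike.congr_fun hf g)

section TwistedCommutation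

variable {N P : Type*} [Group N] [Group P] {f : N →* P} {τ : MulAut N} {p : P}

theorem map_mul_pow_of_twisted (h : ∀ a, f a * p = p * f (τ a)) (k : ℕ) (a : N) :
    f a * p ^ k = p ^ k * f ((τ ^ k) a) := by
  induction k with
  | zero => simp
  | succ k ih => rw [pow_succ, ← mul_assoc, ih, mul_assoc, h, ← mul_assoc, pow_succ' τ,
      MulAut.mul_apply]

theorem map_mul_zpow_of_twisted (h : ∀ a, f a * p = p * f (τ a)) (k : ℤ) (a : N) :
    f a * p ^ k = p ^ k * f ((τ ^ k) a) := by
  obtain ⟨k, rfl | rfl⟩ := k.eq_nat_or_neg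
  · simpa only [zpow_natCast] using map_mul_pow_of_twisted h k a
  · rw [zpow_neg, zpow_neg, zpow_natCast, zpow_natCast, mul_inv_eq_iff_eq_mul, mul_assoc,
      map_mul_pow_of_twisted h, MulAut.apply_inv_self, inv_mul_cancel_left]

end TwistedCommutation

/-- The group `⟨N, x | x⁻¹ a x = τ a for a ∈ N, xⁿ = c⟩`. It is an extension of `ZMod n` by `N` as
soon as `τ c = c` and `τⁿ` is conjugation by `c⁻¹`, but the presentation makes sense without these
conditions, which are therefore hypotheses of the lemmas that need them. -/
def CyclicExtension {N : Type*} [Group N] (τ : MulAut N) (n : ℕ) (c : N) : Type _ :=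
  (N ⋊[zpowersHom (MulAut N) τ⁻¹] Multiplicative ℤ) ⧸
    Subgroup.normalClosure {SemidirectProduct.inl c⁻¹ * SemidirectProduct.inr (.ofAdd (n : ℤ))}

namespace CyclicExtension

variable {N : Type*} [Group N] (τ : MulAut N) (n : ℕ) (c : N)

noncomputable instance : Group (CyclicExtension τ n c) :=
  inferInstanceAs (Group (_ ⧸ Subgroup.normalClosure _))

/-- The quotient map from the split extension of `ℤ` by `N`. -/
noncomputable def mk :
    N ⋊[zpowersHom (MulAut N) τ⁻¹] Multiplicative ℤ →* CyclicExtension τ n c :=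
  QuotientGroup.mk' _

/-- The canonical map from `N` to the cyclic extension. -/
noncomputable def of : N →* CyclicExtension τ n c := (mk τ n c).comp SemidirectProduct.inl

/-- The adjoined `n`-th root of `c`. -/
noncomputable def root : CyclicExtension τ n c := mk τ n c (SemidirectProduct.inr (.ofAdd 1))

variable {τ n c}

theorem mk_inr (k : ℤ) : mk τ n c (SemidirectProduct.inr (.ofAdd k)) = root τ n c ^ k := by
  rw [root, ← map_zpow, ← map_zpow, ← ofAdd_zsmul, smul_eq_mul, mul_one]

theorem of_mul_root (a : N) : of τ n c a * root τ n c = root τ n c * of τ n c (τ a) := by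
  simp only [of, root, MonoidHom.comp_apply, ← map_mul]
  congr 1
  ext <;> simp

theorem root_pow : root τ n c ^ n = of τ n c c := by
  have h_rel : mk τ n c (SemidirectProduct.inl c⁻¹ * SemidirectProduct.inr (.ofAdd (n : ℤ))) = 1 :=
    (QuotientGroup.eq_one_iff _).2 (Subgroup.subset_normalClosure rfl)
  rw [map_mul, mk_inr, zpow_natCast] at h_rel
  rw [eq_inv_of_mul_eq_one_right h_rel, of, MonoidHom.comp_apply, ← map_inv, ← map_inv, inv_inv]

theorem exists_eq_of_mul_root_zpow (g : CyclicExtension τ n c) :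
    ∃ (a : N) (k : ℤ), g = of τ n c a * root τ n c ^ k := by
  obtain ⟨⟨a, k⟩, rfl⟩ := QuotientGroup.mk'_surjective _ g
  refine ⟨a, k.toAdd, ?_⟩
  rw [SemidirectProduct.mk_eq_inl_mul_inr, map_mul, ← mk_inr]
  rfl

theorem eq_top_of_mem {S : Subgroup (CyclicExtension τ n c)} (h_of : ∀ a, of τ n c a ∈ S)
    (h_root : root τ n c ∈ S) : S = ⊤ := by
  refine eq_top_iff.2 fun g _ ↦ ?_
  obtain ⟨a, k, rfl⟩ := exists_eq_of_mul_root_zpow g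
  exact S.mul_mem (h_of a) (S.zpow_mem h_root k)

theorem hom_ext {P : Type*} [Group P] {f g : CyclicExtension τ n c →* P}
    (h_of : ∀ a, f (of τ n c a) = g (of τ n c a)) (h_root : f (root τ n c) = g (root τ n c)) :
    f = g :=
  MonoidHom.eq_of_eqOn_top fun _ _ ↦
    (eq_top_of_mem (S := f.eqLocus g) h_of h_root).ge (Subgroup.mem_top _)

theorem map_mul_eq_mul_map {P : Type*} [Group P] {f g : CyclicExtension τ n c →* P} {p : P}
    (h_of : ∀ a, f (of τ n c a) * p = p * g (of τ n c a))
    (h_root : f (root τ n c) * p = p * g (root τ n c)) (b : CyclicExtension τ n c) :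
    f b * p = p * g b := by
  have h_conj : f = (MulAut.conj p).toMonoidHom.comp g :=
    hom_ext (fun a ↦ eq_mul_inv_of_mul_eq (h_of a)) (eq_mul_inv_of_mul_eq h_root)
  exact mul_eq_of_eq_mul_inv (DFunLike.congr_fun h_conj b)

section Lift

variable {P : Type*} [Group P] (f : N →* P) (p : P)

theorem comp_zpowersHom_inv (h : ∀ a, f a * p = p * f (τ a)) (k : Multiplicative ℤ) :
    f.comp (zpowersHom (MulAut N) τ⁻¹ k).toMonoidHom =
      (MulAut.conj (zpowersHom P p k)).toMonoidHom.comp f := by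
  ext a
  have h_semi := map_mul_zpow_of_twisted h k.toAdd ((τ ^ k.toAdd)⁻¹ a)
  rw [MulAut.apply_inv_self] at h_semi
  change f ((τ⁻¹ ^ k.toAdd) a) = p ^ k.toAdd * f a * (p ^ k.toAdd)⁻¹
  rw [← h_semi, mul_inv_cancel_right, inv_zpow]

variable (h : ∀ a, f a * p = p * f (τ a)) (hp : p ^ n = f c)

/-- The homomorphism that is `f` on `N` and sends the root to `p`. -/
noncomputable def lift : CyclicExtension τ n c →* P :=
  QuotientGroup.lift _ (SemidirectProduct.lift f (zpowersHom P p) (comp_zpowersHom_inv f p h))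
    (Subgroup.normalClosure_le_normal (N := MonoidHom.ker _) (by simp [MonoidHom.mem_ker, hp]))

@[simp]
theorem lift_of (a : N) : lift f p h hp (of τ n c a) = f a :=
  SemidirectProduct.lift_inl _ _ (comp_zpowersHom_inv f p h) a

@[simp]
theorem lift_root : lift f p h hp (root τ n c) = p :=
  (SemidirectProduct.lift_inr _ _ (comp_zpowersHom_inv f p h) _).trans (by simp)

end Lift

theorem relator_mem_center (hc : τ c = c) (hτ : τ ^ n = MulAut.conj c⁻¹) :
    (SemidirectProduct.inl c⁻¹ * SemidirectProduct.inr (.ofAdd (n : ℤ)) :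
      N ⋊[zpowersHom (MulAut N) τ⁻¹] Multiplicative ℤ) ∈ Subgroup.center _ := by
  have h_fix (k : ℤ) : (τ⁻¹ ^ k) c⁻¹ = c⁻¹ := by
    rw [map_inv, inv_inj]
    exact zpow_mem (inv_mem (show τ ∈ MulAction.stabilizer (MulAut N) c from hc)) k
  rw [Subgroup.mem_center_iff]
  rintro ⟨a, k⟩
  refine SemidirectProduct.ext ?_ (mul_comm _ _)
  simp only [SemidirectProduct.mul_left, SemidirectProduct.left_inl,
    SemidirectProduct.right_inl, SemidirectProduct.left_inr, SemidirectProduct.right_inr,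
    zpowersHom_apply, toAdd_ofAdd, zpow_natCast, map_one, mul_one, one_mul, h_fix, inv_pow, hτ,
    ← map_inv, inv_inv, MulAut.conj_apply, MulAut.one_apply, mul_assoc, inv_mul_cancel_left]

theorem of_injective (hn : n ≠ 0) (hc : τ c = c) (hτ : τ ^ n = MulAut.conj c⁻¹) :
    Function.Injective (of τ n c) := by
  refine (injective_iff_map_eq_one _).2 fun a ha ↦ ?_
  have ha_mem := (QuotientGroup.eq_one_iff _).1 ha
  rw [normalClosure_singleton_of_mem_center (relator_mem_center hc hτ)] at ha_mem
  obtain ⟨k, hk : _ ^ k = _⟩ := ha_mem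
  obtain rfl : k = 0 := by
    have hk_right := congrArg SemidirectProduct.rightHom hk
    rw [map_zpow, map_mul, SemidirectProduct.rightHom_inl, SemidirectProduct.rightHom_inr, one_mul,
      SemidirectProduct.rightHom_inl, ← ofAdd_zsmul, ofAdd_eq_one, smul_eq_mul] at hk_right
    simpa [hn] using hk_right
  exact SemidirectProduct.inl_injective (hk.symm.trans (zpow_zero _))

variable (τ n c) in
/-- The projection onto the cyclic quotient. -/
noncomputable def toZMod : CyclicExtension τ n c →* Multiplicative (ZMod n) :=
  lift 1 (.ofAdd 1) (by simp) (by rw [← ofAdd_nsmul]; simp)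

@[simp]
theorem toZMod_of (a : N) : toZMod τ n c (of τ n c a) = 1 := lift_of _ _ _ _ a

@[simp]
theorem toZMod_root : toZMod τ n c (root τ n c) = .ofAdd 1 := lift_root _ _ _ _

theorem ker_toZMod : (toZMod τ n c).ker = (of τ n c).range := by
  refine le_antisymm (fun g hg ↦ ?_) ?_
  · obtain ⟨a, k, rfl⟩ := exists_eq_of_mul_root_zpow g
    obtain ⟨l, rfl⟩ : (n : ℤ) ∣ k := by
      rw [← ZMod.intCast_zmod_eq_zero_iff_dvd]
      simpa [MonoidHom.mem_ker, ← ofAdd_zsmul] using hg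
    exact ⟨a * c ^ l, by rw [zpow_mul, zpow_natCast, root_pow, map_mul, map_zpow]⟩
  · rintro _ ⟨a, rfl⟩
    exact toZMod_of a

theorem toZMod_surjective : Function.Surjective (toZMod τ n c) := by
  intro k
  obtain ⟨l, hl⟩ := ZMod.intCast_surjective k.toAdd
  exact ⟨root τ n c ^ l, by simp [← ofAdd_zsmul, hl]⟩

theorem card (hn : n ≠ 0) (hc : τ c = c) (hτ : τ ^ n = MulAut.conj c⁻¹) :
    Nat.card (CyclicExtension τ n c) = Nat.card N * n := by
  have h_index : (toZMod τ n c).ker.index = n := by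
    have h_top : (toZMod τ n c).range = ⊤ := MonoidHom.range_eq_top.2 toZMod_surjective
    rw [Subgroup.index_ker, h_top, Subgroup.card_top, Nat.card_congr Multiplicative.toAdd,
      Nat.card_zmod]
  have h_range : Nat.card (of τ n c).range = Nat.card N :=
    Nat.card_congr (MonoidHom.ofInjective (of_injective hn hc hτ)).toEquiv.symm
  rw [← (of τ n c).range.card_mul_index, h_range, ← ker_toZMod, h_index]

end CyclicExtension

section CyclicNorm

variable {A : Type*} [CommGroup A]

/-- The product `a * α a * ⋯ * αⁿ⁻¹ a`, the norm of `a` when `αⁿ = 1`. -/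
def cyclicNorm (α : MulAut A) (n : ℕ) (a : A) : A := ∏ k ∈ Finset.range n, (α ^ k) a

theorem cyclicNorm_succ (α : MulAut A) (n : ℕ) (a : A) :
    cyclicNorm α (n + 1) a = α (cyclicNorm α n a) * a := by
  simp [cyclicNorm, Finset.prod_range_succ', pow_succ', map_prod]

theorem mul_map_pow_of_twisted {P : Type*} [Group P] {f : A →* P} {β : MulAut A} {p : P}
    (h : ∀ a, f a * p = p * f (β a)) (c : A) (k : ℕ) :
    (p * f c) ^ k = p ^ k * f (cyclicNorm β k c) := by
  induction k with
  | zero => simp [cyclicNorm]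
  | succ k ih =>
    calc (p * f c) ^ (k + 1) = p ^ k * (f (cyclicNorm β k c) * p) * f c := by
          rw [pow_succ, ih]; group
      _ = p ^ (k + 1) * f (cyclicNorm β (k + 1) c) := by
          rw [h, cyclicNorm_succ, map_mul, pow_succ]; group

theorem cyclicNorm_eq_one_of_dvd {α : MulAut A} {d n : ℕ} {a : A} (hα : α ^ d = 1)
    (ha : cyclicNorm α d a = 1) (hdn : d ∣ n) : cyclicNorm α n a = 1 := by
  obtain ⟨k, rfl⟩ := hdn
  induction k with
  | zero => rfl
  | succ k ih =>
    rw [cyclicNorm] at ih ha ⊢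
    simp only [mul_add_one, Finset.prod_range_add, ih, pow_add, pow_mul, hα, one_pow, one_mul, ha]

end CyclicNorm

/-- The data for an extension of `ZMod n × ZMod m` by the abelian group `A`, generated over `A` by
`x` and `y` with `x⁻¹ a x = α a`, `y⁻¹ a y = β a`, `y x = x y c`, `xⁿ = u` and `yᵐ = v`; the
remaining fields are the consistency conditions of this presentation. -/
structure BicyclicDatum (A : Type*) [CommGroup A] where
  (α β : MulAut A)
  (n m : ℕ)
  (c u v : A)
  n_ne_zero : n ≠ 0
  m_ne_zero : m ≠ 0
  commute : Commute α β
  α_pow : α ^ n = 1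
  β_pow : β ^ m = 1
  α_u : α u = u
  β_v : β v = v
  norm_α : β u * cyclicNorm α n c = u
  norm_β : v * cyclicNorm β m c = α v

namespace BicyclicDatum

variable {A : Type*} [CommGroup A] (D : BicyclicDatum A)

/-- The subgroup of the extension generated by `A` and `y`. -/
abbrev YExtension : Type _ := CyclicExtension D.β D.m D.v

/-- The generator `y` of `D.YExtension`. -/
noncomputable abbrev yRoot : D.YExtension := CyclicExtension.root D.β D.m D.v

/-- The inclusion of `A` into `D.YExtension`. -/
noncomputable abbrev yOf : A →* D.YExtension := CyclicExtension.of D.β D.m D.v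

theorem β_pow_eq_conj : D.β ^ D.m = MulAut.conj D.v⁻¹ := by
  ext a
  rw [D.β_pow, MulAut.one_apply, MulAut.conj_apply, mul_inv_cancel_comm]

theorem α_β_apply (a : A) : D.α (D.β a) = D.β (D.α a) := DFunLike.congr_fun D.commute a

theorem of_α_mul_yRoot (a : A) :
    D.yOf (D.α a) * (D.yRoot * D.yOf D.c) = D.yRoot * D.yOf D.c * D.yOf (D.α (D.β a)) := by
  rw [← mul_assoc, CyclicExtension.of_mul_root, mul_assoc, mul_assoc, ← map_mul, ← map_mul,
    α_β_apply, mul_comm]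

theorem yRoot_mul_of_c_pow : (D.yRoot * D.yOf D.c) ^ D.m = D.yOf (D.α D.v) := by
  rw [mul_map_pow_of_twisted CyclicExtension.of_mul_root, CyclicExtension.root_pow, ← map_mul,
    D.norm_β]

/-- The endomorphism of `D.YExtension` that becomes conjugation `g ↦ x⁻¹ g x`. -/
noncomputable def xEnd : Monoid.End D.YExtension :=
  CyclicExtension.lift (D.yOf.comp D.α.toMonoidHom) (D.yRoot * D.yOf D.c) D.of_α_mul_yRoot
    D.yRoot_mul_of_c_pow

theorem xEnd_of (a : A) : D.xEnd (D.yOf a) = D.yOf (D.α a) :=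
  CyclicExtension.lift_of _ _ _ _ a

theorem xEnd_yRoot : D.xEnd D.yRoot = D.yRoot * D.yOf D.c :=
  CyclicExtension.lift_root _ _ _ _

theorem xEnd_pow_of (k : ℕ) (a : A) : (D.xEnd ^ k) (D.yOf a) = D.yOf ((D.α ^ k) a) := by
  induction k with
  | zero => simp
  | succ k ih =>
    rw [pow_succ', Monoid.End.coe_mul, Function.comp_apply, ih, xEnd_of, pow_succ',
      MulAut.mul_apply]

theorem xEnd_pow_yRoot (k : ℕ) :
    (D.xEnd ^ k) D.yRoot = D.yRoot * D.yOf (cyclicNorm D.α k D.c) := by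
  induction k with
  | zero => simp [cyclicNorm]
  | succ k ih =>
    rw [pow_succ', Monoid.End.coe_mul, Function.comp_apply, ih, map_mul, xEnd_yRoot, xEnd_of,
      cyclicNorm_succ, mul_assoc, ← map_mul, mul_comm D.c]

theorem xEnd_pow_n : D.xEnd ^ D.n = (MulAut.conj (D.yOf D.u)⁻¹).toMonoidHom := by
  refine CyclicExtension.hom_ext (fun a ↦ ?_) ?_
  · change (D.xEnd ^ D.n) (D.yOf a) = (D.yOf D.u)⁻¹ * D.yOf a * (D.yOf D.u)⁻¹⁻¹
    rw [xEnd_pow_of, D.α_pow, MulAut.one_apply, inv_inv, ← map_inv, ← map_mul, ← map_mul, mul_comm,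
      mul_inv_cancel_left]
  · change (D.xEnd ^ D.n) D.yRoot = (D.yOf D.u)⁻¹ * D.yRoot * (D.yOf D.u)⁻¹⁻¹
    rw [xEnd_pow_yRoot, inv_inv, mul_assoc, eq_inv_mul_iff_mul_eq, ← mul_assoc,
      CyclicExtension.of_mul_root, mul_assoc, ← map_mul, D.norm_α]

/-- The automorphism of `D.YExtension` that becomes conjugation `g ↦ x⁻¹ g x`. -/
noncomputable def xAut : MulAut D.YExtension :=
  autOfBijectivePow D.xEnd D.n_ne_zero <| by
    rw [xEnd_pow_n]
    exact (MulAut.conj _).bijective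

theorem xAut_pow_apply (k : ℕ) (g : D.YExtension) : (D.xAut ^ k) g = (D.xEnd ^ k) g :=
  autOfBijectivePow_pow_apply _ _ k g

theorem xAut_pow_n : D.xAut ^ D.n = MulAut.conj (D.yOf D.u)⁻¹ := by
  ext g
  rw [xAut_pow_apply, xEnd_pow_n]
  rfl

theorem xAut_of (a : A) : D.xAut (D.yOf a) = D.yOf (D.α a) := D.xEnd_of a

theorem xAut_yRoot : D.xAut D.yRoot = D.yRoot * D.yOf D.c := D.xEnd_yRoot

theorem xAut_of_u : D.xAut (D.yOf D.u) = D.yOf D.u := by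
  rw [xAut_of, D.α_u]

/-- The group with the presentation described in `BicyclicDatum`. -/
abbrev Extension : Type _ := CyclicExtension D.xAut D.n (D.yOf D.u)

/-- The generator `x`. -/
noncomputable def x : D.Extension := CyclicExtension.root D.xAut D.n (D.yOf D.u)

/-- The inclusion of `D.YExtension` into the full extension. -/
noncomputable abbrev ofY : D.YExtension →* D.Extension :=
  CyclicExtension.of D.xAut D.n (D.yOf D.u)

/-- The generator `y`. -/
noncomputable def y : D.Extension := D.ofY D.yRoot

/-- The inclusion of `A` into the extension. -/
noncomputable def ι : A →* D.Extension := D.ofY.comp D.yOf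

theorem ι_mul_x (a : A) : D.ι a * D.x = D.x * D.ι (D.α a) :=
  (CyclicExtension.of_mul_root _).trans (congrArg (D.x * D.ofY ·) (D.xAut_of a))

theorem ι_mul_y (a : A) : D.ι a * D.y = D.y * D.ι (D.β a) := by
  simp only [ι, y, MonoidHom.comp_apply, ← map_mul, CyclicExtension.of_mul_root]

theorem ι_mul_x_pow (k : ℕ) (a : A) : D.ι a * D.x ^ k = D.x ^ k * D.ι ((D.α ^ k) a) :=
  map_mul_pow_of_twisted D.ι_mul_x k a

theorem y_mul_x_pow (k : ℕ) :
    D.y * D.x ^ k = D.x ^ k * (D.y * D.ι (cyclicNorm D.α k D.c)) := by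
  rw [y, x, map_mul_pow_of_twisted CyclicExtension.of_mul_root, xAut_pow_apply, xEnd_pow_yRoot,
    map_mul]
  rfl

theorem y_mul_x : D.y * D.x = D.x * (D.y * D.ι D.c) := by
  simpa [cyclicNorm] using D.y_mul_x_pow 1

theorem ι_c : D.ι D.c = comm' D.y D.x := by
  rw [comm', mul_assoc, y_mul_x]
  group

theorem x_pow_n : D.x ^ D.n = D.ι D.u := CyclicExtension.root_pow

theorem y_pow_m : D.y ^ D.m = D.ι D.v := by
  rw [y, ← map_pow, CyclicExtension.root_pow]
  rfl

theorem card_extension : Nat.card D.Extension = Nat.card A * D.m * D.n := by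
  rw [CyclicExtension.card D.n_ne_zero D.xAut_of_u D.xAut_pow_n,
    CyclicExtension.card D.m_ne_zero D.β_v D.β_pow_eq_conj]

theorem hom_ext {P : Type*} [Group P] {f g : D.Extension →* P}
    (hι : ∀ a, f (D.ι a) = g (D.ι a)) (hx : f D.x = g D.x) (hy : f D.y = g D.y) : f = g :=
  CyclicExtension.hom_ext (DFunLike.congr_fun
    (CyclicExtension.hom_ext (f := f.comp D.ofY) (g := g.comp D.ofY) hι hy)) hx

section Lift

variable {D} {P : Type*} [Group P] (f : A →* P) (px py : P)
  (hy : ∀ a, f a * py = py * f (D.β a)) (hv : py ^ D.m = f D.v)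

/-- The homomorphism from `D.YExtension` that is `f` on `A` and sends `y` to `py`. -/
noncomputable abbrev liftY : D.YExtension →* P := CyclicExtension.lift f py hy hv

theorem liftY_mul (hx : ∀ a, f a * px = px * f (D.α a)) (hyx : py * px = px * (py * f D.c))
    (g : D.YExtension) :
    liftY f py hy hv g * px = px * liftY f py hy hv (D.xAut g) := by
  refine CyclicExtension.map_mul_eq_mul_map
    (g := (liftY f py hy hv).comp D.xAut.toMonoidHom) (fun a ↦ ?_) ?_ g
  · simp [xAut_of, hx]
  · simp [xAut_yRoot, hyx]

variable (hx : ∀ a, f a * px = px * f (D.α a)) (hyx : py * px = px * (py * f D.c))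
  (hu : px ^ D.n = f D.u)

/-- The homomorphism that is `f` on `A` and sends `x` and `y` to `px` and `py`. -/
noncomputable def lift : D.Extension →* P :=
  CyclicExtension.lift (liftY f py hy hv) px (liftY_mul f px py hy hv hx hyx)
    (hu.trans (CyclicExtension.lift_of _ _ _ _ _).symm)

@[simp]
theorem lift_ι (a : A) : lift f px py hy hv hx hyx hu (D.ι a) = f a := by
  rw [lift, ι, MonoidHom.comp_apply, CyclicExtension.lift_of, CyclicExtension.lift_of]

@[simp]
theorem lift_x : lift f px py hy hv hx hyx hu D.x = px :=
  CyclicExtension.lift_root _ _ _ _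

@[simp]
theorem lift_y : lift f px py hy hv hx hyx hu D.y = py := by
  rw [lift, y, CyclicExtension.lift_of, CyclicExtension.lift_root]

end Lift

/-- The projection onto the quotient by `A`. -/
noncomputable def toZModProd :
    D.Extension →* Multiplicative (ZMod D.n) × Multiplicative (ZMod D.m) :=
  lift 1 (.ofAdd 1, 1) (1, .ofAdd 1) (by simp) (by simp [← ofAdd_nsmul]) (by simp) (by simp)
    (by simp [← ofAdd_nsmul])

@[simp]
theorem toZModProd_ι (a : A) : D.toZModProd (D.ι a) = 1 := lift_ι ..

@[simp]
theorem toZModProd_x : D.toZModProd D.x = (.ofAdd 1, 1) := lift_x ..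

@[simp]
theorem toZModProd_y : D.toZModProd D.y = (1, .ofAdd 1) := lift_y ..

theorem toZMod_eq_fst_toZModProd (g : D.Extension) :
    CyclicExtension.toZMod D.xAut D.n (D.yOf D.u) g = (D.toZModProd g).1 := by
  suffices h : CyclicExtension.toZMod D.xAut D.n (D.yOf D.u) =
      (MonoidHom.fst _ _).comp D.toZModProd from DFunLike.congr_fun h g
  exact hom_ext D (fun a ↦ (CyclicExtension.toZMod_of _).trans (by simp))
    (CyclicExtension.toZMod_root.trans (by simp))
    ((CyclicExtension.toZMod_of _).trans (by simp))

theorem toZMod_eq_snd_toZModProd (g : D.YExtension) :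
    CyclicExtension.toZMod D.β D.m D.v g = (D.toZModProd (D.ofY g)).2 := by
  suffices h : CyclicExtension.toZMod D.β D.m D.v =
      ((MonoidHom.snd _ _).comp D.toZModProd).comp D.ofY from DFunLike.congr_fun h g
  exact CyclicExtension.hom_ext
    (fun a ↦ (CyclicExtension.toZMod_of a).trans (congrArg Prod.snd (D.toZModProd_ι a)).symm)
    (CyclicExtension.toZMod_root.trans (congrArg Prod.snd D.toZModProd_y).symm)

theorem ker_toZModProd : D.toZModProd.ker = D.ι.range := by
  refine le_antisymm (fun g hg ↦ ?_) ?_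
  · have hg_fst : g ∈ (CyclicExtension.toZMod D.xAut D.n (D.yOf D.u)).ker := by
      rw [MonoidHom.mem_ker, toZMod_eq_fst_toZModProd, hg, Prod.fst_one]
    rw [CyclicExtension.ker_toZMod] at hg_fst
    obtain ⟨h, rfl⟩ := hg_fst
    have hh_snd : h ∈ (CyclicExtension.toZMod D.β D.m D.v).ker := by
      rw [MonoidHom.mem_ker, toZMod_eq_snd_toZModProd, hg, Prod.snd_one]
    rw [CyclicExtension.ker_toZMod] at hh_snd
    obtain ⟨a, rfl⟩ := hh_snd
    exact ⟨a, rfl⟩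
  · rintro _ ⟨a, rfl⟩
    exact D.toZModProd_ι a

theorem toZModProd_surjective : Function.Surjective D.toZModProd := by
  rintro ⟨k, l⟩
  obtain ⟨k', hk⟩ := ZMod.intCast_surjective k.toAdd
  obtain ⟨l', hl⟩ := ZMod.intCast_surjective l.toAdd
  exact ⟨D.x ^ k' * D.y ^ l', by simp [← ofAdd_zsmul, hk, hl]⟩

section Generated

/-- `A` is generated by `c` as a module over the group ring of `⟨α, β⟩`. -/
def IsGenerated : Prop :=
  ∀ S : Subgroup A, D.c ∈ S → (∀ a ∈ S, D.α a ∈ S) → (∀ a ∈ S, D.β a ∈ S) → S = ⊤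

variable {D}

theorem IsGenerated.range_ι_le (hD : D.IsGenerated) {S : Subgroup D.Extension}
    (hc : D.ι D.c ∈ S) (hx : ∀ g ∈ S, D.x⁻¹ * g * D.x ∈ S) (hy : ∀ g ∈ S, D.y⁻¹ * g * D.y ∈ S) :
    D.ι.range ≤ S := by
  have h_top : S.comap D.ι = ⊤ := by
    refine hD _ hc (fun a ha ↦ ?_) (fun a ha ↦ ?_)
    · simpa [mul_assoc, D.ι_mul_x] using hx _ ha
    · simpa [mul_assoc, D.ι_mul_y] using hy _ ha
  rintro _ ⟨a, rfl⟩
  exact h_top.ge (Subgroup.mem_top a)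

theorem IsGenerated.closure_eq_top (hD : D.IsGenerated) :
    Subgroup.closure {D.x, D.y} = ⊤ := by
  set S := Subgroup.closure {D.x, D.y}
  have hx : D.x ∈ S := Subgroup.subset_closure (by simp)
  have hy : D.y ∈ S := Subgroup.subset_closure (by simp)
  have hc : D.ι D.c ∈ S := by
    rw [ι_c]
    exact S.mul_mem (S.mul_mem (S.mul_mem (S.inv_mem hy) (S.inv_mem hx)) hy) hx
  have h_ι (a : A) : D.ι a ∈ S := hD.range_ι_le hc
    (fun g hg ↦ S.mul_mem (S.mul_mem (S.inv_mem hx) hg) hx)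
    (fun g hg ↦ S.mul_mem (S.mul_mem (S.inv_mem hy) hg) hy) ⟨a, rfl⟩
  have h_ofY : S.comap D.ofY = ⊤ := CyclicExtension.eq_top_of_mem h_ι hy
  exact CyclicExtension.eq_top_of_mem (fun g ↦ h_ofY.ge (Subgroup.mem_top g)) hx

theorem IsGenerated.commutator_eq_range_ι (hD : D.IsGenerated) :
    commutator D.Extension = D.ι.range := by
  have h_conj (z g : D.Extension) (hg : g ∈ commutator D.Extension) :
      z⁻¹ * g * z ∈ commutator D.Extension := by
    simpa using Subgroup.Normal.conj_mem inferInstance g hg z⁻¹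
  refine le_antisymm ?_ (hD.range_ι_le ?_ (h_conj D.x) (h_conj D.y))
  · rw [← ker_toZModProd]
    exact Abelianization.commutator_subset_ker _
  · rw [ι_c]
    simpa [comm', commutatorElement_def, commutator_def] using
      Subgroup.commutator_mem_commutator (Subgroup.mem_top D.y⁻¹) (Subgroup.mem_top D.x⁻¹)

theorem IsGenerated.isMetabelian (hD : D.IsGenerated) : IsMetabelian D.Extension :=
  isMetabelian_of_commutator_le_range D.ι hD.commutator_eq_range_ι.le

theorem IsGenerated.nonempty_abelianization_mulEquiv (hD : D.IsGenerated) :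
    Nonempty (Abelianization D.Extension ≃* Multiplicative (ZMod D.n × ZMod D.m)) := by
  have h_ker : commutator D.Extension = D.toZModProd.ker :=
    hD.commutator_eq_range_ι.trans D.ker_toZModProd.symm
  exact ⟨(QuotientGroup.quotientMulEquivOfEq h_ker).trans <|
    (QuotientGroup.quotientKerEquivOfSurjective _ D.toZModProd_surjective).trans
      (MulEquiv.prodMultiplicative _ _).symm⟩

theorem IsGenerated.isSigmaGroup (hD : D.IsGenerated) (s : A →* A)
    (hα : ∀ a, D.α (s (D.α a)) = s a) (hβ : ∀ a, D.β (s (D.β a)) = s a)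
    (hc : D.α (D.β (s D.c)) = D.c) (hu : s D.u = D.u⁻¹) (hv : s D.v = D.v⁻¹) :
    IsSigmaGroup D.Extension := by
  have h_semi_x (a : A) : D.ι (s a) * D.x⁻¹ = D.x⁻¹ * D.ι (s (D.α a)) := by
    rw [mul_inv_eq_iff_eq_mul, mul_assoc, ι_mul_x, inv_mul_cancel_left, hα]
  have h_semi_y (a : A) : D.ι (s a) * D.y⁻¹ = D.y⁻¹ * D.ι (s (D.β a)) := by
    rw [mul_inv_eq_iff_eq_mul, mul_assoc, ι_mul_y, inv_mul_cancel_left, hβ]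
  have h_yx : D.y⁻¹ * D.x⁻¹ = D.x⁻¹ * (D.y⁻¹ * D.ι (s D.c)) := by
    have h_sc : D.ι (s D.c) * (D.x * D.y) = D.y * D.x := by
      rw [← mul_assoc, ι_mul_x, mul_assoc, ι_mul_y, ← α_β_apply, hc, y_mul_x]
    rw [← mul_inv_rev, ← mul_assoc, ← mul_inv_rev, ← h_sc]
    group
  refine isSigmaGroup_of_forall_eq_inv hD.closure_eq_top
    (lift (D.ι.comp s) D.x⁻¹ D.y⁻¹ h_semi_y ?_ h_semi_x h_yx ?_) ?_
  · rw [inv_pow, y_pow_m, MonoidHom.comp_apply, hv, map_inv]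
  · rw [inv_pow, x_pow_n, MonoidHom.comp_apply, hu, map_inv]
  · rintro g (rfl | rfl)
    · exact lift_x ..
    · exact lift_y ..

end Generated

section Commutators

theorem comm'_ι_x (a : A) : comm' (D.ι a) D.x = D.ι (a⁻¹ * D.α a) := by
  rw [comm', mul_assoc, ι_mul_x, ← mul_assoc, inv_mul_cancel_right, map_mul, map_inv]

theorem comm'_ι_y (a : A) : comm' (D.ι a) D.y = D.ι (a⁻¹ * D.β a) := by
  rw [comm', mul_assoc, ι_mul_y, ← mul_assoc, inv_mul_cancel_right, map_mul, map_inv]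

theorem comm'_x_pow_y (k : ℕ) :
    comm' (D.x ^ k) D.y = D.ι (cyclicNorm D.α k D.c)⁻¹ := by
  rw [comm', mul_assoc, ← mul_inv_rev, inv_mul_eq_iff_eq_mul, y_mul_x_pow, map_inv]
  group

theorem comm'_x_pow_ι (k : ℕ) (a : A) :
    comm' (D.x ^ k) (D.ι a) = D.ι (((D.α ^ k) a)⁻¹ * a) := by
  rw [comm', mul_assoc, ← mul_inv_rev, inv_mul_eq_iff_eq_mul, ι_mul_x_pow, map_mul, map_inv]
  group

end Commutators

end BicyclicDatum

namespace B18

/-- The common derived subgroup of the groups `M_{e,i}`: the element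
`s₂ ^ p * t₃ ^ q * t₄ ^ r * (y ^ 3) ^ k` is encoded by its exponents `(p, q, r, k)`. -/
abbrev Derived : Type := Multiplicative (ZMod 9 × ZMod 9 × ZMod 3 × ZMod 9)

/-- The element of `Derived` with the given exponents. -/
abbrev el (p q : ZMod 9) (r : ZMod 3) (k : ZMod 9) : Derived := .ofAdd (p, q, r, k)

theorem el_eq_prod_pow (p q : ZMod 9) (r : ZMod 3) (k : ZMod 9) :
    el p q r k =
      el 1 0 0 0 ^ p.val * el 0 1 0 0 ^ q.val * el 0 0 1 0 ^ r.val * el 0 0 0 1 ^ k.val := by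
  simp [el, ← ofAdd_nsmul, ← ofAdd_add]

theorem derived_hom_ext {P : Type*} [Monoid P] {f g : Derived →* P}
    (hp : f (el 1 0 0 0) = g (el 1 0 0 0)) (hq : f (el 0 1 0 0) = g (el 0 1 0 0))
    (hr : f (el 0 0 1 0) = g (el 0 0 1 0)) (hk : f (el 0 0 0 1) = g (el 0 0 0 1)) : f = g := by
  ext ⟨p, q, r, k⟩
  change f (el p q r k) = g (el p q r k)
  simp only [el_eq_prod_pow p q r k, map_mul, map_pow, hp, hq, hr, hk]

/-- Reduction modulo `3`. -/
def red : ZMod 9 →+ ZMod 3 := (ZMod.castHom (by decide) (ZMod 3)).toAddMonoidHom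

/-- The embedding of `ZMod 3` in `ZMod 9` induced by multiplication by `3`. -/
def triple : ZMod 3 →+ ZMod 9 where
  toFun r := 3 * r.val
  map_zero' := rfl
  map_add' := by decide

/-- Conjugation by `x`, which sends `s₂` to `s₂ * s₃` and `y ^ 3` to `(y * s₂) ^ 3`. -/
def actX : Monoid.End Derived := AddMonoidHom.toMultiplicative
  { toFun := fun (p, q, r, k) ↦ (4 * p + 3 * k, q + 3 * p + 3 * k, r + red p + red k, k + 4 * p)
    map_zero' := by decide
    map_add' := by
      rintro ⟨p, q, r, k⟩ ⟨p', q', r', k'⟩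
      ext <;> simp only [Prod.fst_add, Prod.snd_add, map_add] <;> ring }

/-- Conjugation by `y`. -/
def actY : Monoid.End Derived := AddMonoidHom.toMultiplicative
  { toFun := fun (p, q, r, k) ↦ (p, p + q - triple r, red q + r, k)
    map_zero' := by decide
    map_add' := by
      rintro ⟨p, q, r, k⟩ ⟨p', q', r', k'⟩
      ext <;> simp only [Prod.fst_add, Prod.snd_add, map_add] <;> ring }

/-- The action of the automorphism that inverts `x` and `y`. -/
def actInv : Monoid.End Derived := AddMonoidHom.toMultiplicative
  { toFun := fun (p, q, r, k) ↦ (p, 2 * p - q, red p + 2 * red q + r, -4 * p - k)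
    map_zero' := by decide
    map_add' := by
      rintro ⟨p, q, r, k⟩ ⟨p', q', r', k'⟩
      ext <;> simp only [Prod.fst_add, Prod.snd_add, map_add] <;> ring }

theorem actX_pow_nine : actX ^ 9 = 1 := by
  refine derived_hom_ext ?_ ?_ ?_ ?_ <;> decide

theorem actY_pow_three : actY ^ 3 = 1 := by
  refine derived_hom_ext ?_ ?_ ?_ ?_ <;> decide

/-- Conjugation by `x` as an automorphism. -/
noncomputable def α : MulAut Derived := autOfPowEqOne actX (n := 9) (by decide) actX_pow_nine

/-- Conjugation by `y` as an automorphism. -/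
noncomputable def β : MulAut Derived := autOfPowEqOne actY (n := 3) (by decide) actY_pow_three

theorem commute_α_β : Commute α β := by
  refine MulEquiv.toMonoidHom_injective (derived_hom_ext ?_ ?_ ?_ ?_) <;> decide

theorem α_pow_nine : α ^ 9 = 1 := autOfPowEqOne_pow (by decide) actX_pow_nine

theorem β_pow_three : β ^ 3 = 1 := autOfPowEqOne_pow (by decide) actY_pow_three

/-- The datum of `M_{e,i}` for `d = i - 1`. The element `el 0 6 0 6` of order `3` is to be `w ^ d`;
unless `3` divides `d`, this forces `w` to be its `d`-th power, because `d ^ 2 ≡ 1 [MOD 3]`. -/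
noncomputable def datum {e : ℕ} (he : 2 ≤ e) (d : ℕ) : BicyclicDatum Derived where
  α := α
  β := β
  n := 3 ^ e
  m := 3
  c := el 1 0 0 0
  u := el 0 6 0 6 ^ d
  v := el 0 0 0 1
  n_ne_zero := by positivity
  m_ne_zero := by decide
  commute := commute_α_β
  α_pow := by
    rw [← Nat.add_sub_cancel' he, pow_add, pow_mul, show 3 ^ 2 = 9 from rfl, α_pow_nine, one_pow]
  β_pow := β_pow_three
  α_u := (map_pow α _ d).trans (congrArg (· ^ d) (by decide))
  β_v := by decide
  norm_α := by
    rw [cyclicNorm_eq_one_of_dvd α_pow_nine (by decide) (pow_dvd_pow 3 he), mul_one, map_pow,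
      show β (el 0 6 0 6) = el 0 6 0 6 by decide]
  norm_β := by decide

section Datum

variable {e : ℕ} (he : 2 ≤ e) (d : ℕ)

theorem isGenerated_datum : (datum he d).IsGenerated := by
  intro S (hc : el 1 0 0 0 ∈ S) (hα : ∀ a ∈ S, α a ∈ S) (hβ : ∀ a ∈ S, β a ∈ S)
  have hα' (a : Derived) (ha : a ∈ S) : a⁻¹ * α a ∈ S := S.mul_mem (S.inv_mem ha) (hα a ha)
  have hβ' (a : Derived) (ha : a ∈ S) : a⁻¹ * β a ∈ S := S.mul_mem (S.inv_mem ha) (hβ a ha)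
  have hs₃ : el 3 3 1 4 ∈ S := hα' _ hc
  have hs₄ : el 3 3 1 3 ∈ S := hα' _ hs₃
  have ht₃ : el 0 1 0 0 ∈ S := hβ' _ hc
  have ht₄ : el 0 0 1 0 ∈ S := hβ' _ ht₃
  have hv : el 0 0 0 1 ∈ S := S.mul_mem hs₃ (S.pow_mem hs₄ 2)
  refine eq_top_iff.2 fun ⟨p, q, r, k⟩ _ ↦ (?_ : el p q r k ∈ S)
  rw [el_eq_prod_pow]
  exact S.mul_mem (S.mul_mem (S.mul_mem (S.pow_mem hc _)
    (S.pow_mem ht₃ _)) (S.pow_mem ht₄ _)) (S.pow_mem hv _)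

theorem isSigmaGroup_datum : IsSigmaGroup (datum he d).Extension := by
  have hα : (α.toMonoidHom.comp actInv).comp α.toMonoidHom = actInv := by
    refine derived_hom_ext ?_ ?_ ?_ ?_ <;> decide
  have hβ : (β.toMonoidHom.comp actInv).comp β.toMonoidHom = actInv := by
    refine derived_hom_ext ?_ ?_ ?_ ?_ <;> decide
  have hc : α (β (actInv (el 1 0 0 0))) = el 1 0 0 0 := by decide
  have hw : actInv (el 0 6 0 6) = (el 0 6 0 6)⁻¹ := by decide
  have hv : actInv (el 0 0 0 1) = (el 0 0 0 1)⁻¹ := by decide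
  have hu : actInv (el 0 6 0 6 ^ d) = (el 0 6 0 6 ^ d)⁻¹ := by rw [map_pow, hw, inv_pow]
  exact (isGenerated_datum he d).isSigmaGroup actInv (DFunLike.congr_fun hα)
    (DFunLike.congr_fun hβ) hc hu hv

theorem card_extension_datum : Nat.card (datum he d).Extension = 3 ^ (8 + e) := by
  have h_derived : Nat.card Derived = 3 ^ 7 := by simp
  rw [BicyclicDatum.card_extension, h_derived, pow_add]
  rfl

theorem sgen_two : sgen (datum he d).x (datum he d).y 2 = (datum he d).ι (el 1 0 0 0) :=
  (BicyclicDatum.ι_c _).symm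

theorem sgen_three : sgen (datum he d).x (datum he d).y 3 = (datum he d).ι (el 3 3 1 4) := by
  rw [sgen, sgen_two, BicyclicDatum.comm'_ι_x]
  exact congrArg _ (show (el 1 0 0 0)⁻¹ * α (el 1 0 0 0) = el 3 3 1 4 by decide)

theorem sgen_four : sgen (datum he d).x (datum he d).y 4 = (datum he d).ι (el 3 3 1 3) := by
  rw [sgen, sgen_three, BicyclicDatum.comm'_ι_x]
  exact congrArg _ (show (el 3 3 1 4)⁻¹ * α (el 3 3 1 4) = el 3 3 1 3 by decide)

theorem sgen_five : sgen (datum he d).x (datum he d).y 5 = (datum he d).ι (el 0 0 0 3) := by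
  rw [sgen, sgen_four, BicyclicDatum.comm'_ι_x]
  exact congrArg _ (show (el 3 3 1 3)⁻¹ * α (el 3 3 1 3) = el 0 0 0 3 by decide)

theorem tgenB_three : tgenB (datum he d).x (datum he d).y 3 = (datum he d).ι (el 0 1 0 0) := by
  have ht₂ : tgenB (datum he d).x (datum he d).y 2 = (datum he d).ι (el 1 0 0 0) := sgen_two he d
  rw [tgenB, ht₂, BicyclicDatum.comm'_ι_y]
  exact congrArg _ (show (el 1 0 0 0)⁻¹ * β (el 1 0 0 0) = el 0 1 0 0 by decide)

theorem tgenB_four : tgenB (datum he d).x (datum he d).y 4 = (datum he d).ι (el 0 0 1 0) := by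
  rw [tgenB, tgenB_three, BicyclicDatum.comm'_ι_y]
  exact congrArg _ (show (el 0 1 0 0)⁻¹ * β (el 0 1 0 0) = el 0 0 1 0 by decide)

theorem tgenB_five : tgenB (datum he d).x (datum he d).y 5 = (datum he d).ι (el 0 6 0 0) := by
  rw [tgenB, tgenB_four, BicyclicDatum.comm'_ι_y]
  exact congrArg _ (show (el 0 0 1 0)⁻¹ * β (el 0 0 1 0) = el 0 6 0 0 by decide)

theorem y_pow_three : (datum he d).y ^ 3 = (datum he d).ι (el 0 0 0 1) :=
  BicyclicDatum.y_pow_m _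

theorem x_pow_three_pow : (datum he d).x ^ 3 ^ e = (datum he d).ι (el 0 6 0 6 ^ d) :=
  BicyclicDatum.x_pow_n _

theorem x_pow_three_pow_pow_three : ((datum he d).x ^ 3 ^ e) ^ 3 = 1 := by
  have hw : (el 0 6 0 6 ^ d) ^ 3 = 1 := by
    rw [pow_right_comm, show el 0 6 0 6 ^ 3 = 1 by decide, one_pow]
  rw [x_pow_three_pow, ← map_pow, hw, map_one]

variable {d} in
theorem x_pow_three_pow_pow (hd : ¬ 3 ∣ d) :
    ((datum he d).x ^ 3 ^ e) ^ d = (datum he d).ι (el 0 6 0 6) := by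
  rw [x_pow_three_pow, ← map_pow, pow_pow_self_eq_of_pow_three_eq_one (by decide) hd]

theorem comm'_x_pow_three_y :
    comm' ((datum he d).x ^ 3) (datum he d).y = (datum he d).ι (el 3 6 2 3) := by
  rw [BicyclicDatum.comm'_x_pow_y]
  exact congrArg _ (show (cyclicNorm α 3 (el 1 0 0 0))⁻¹ = el 3 6 2 3 by decide)

theorem comm'_x_pow_three_ι :
    comm' ((datum he d).x ^ 3) ((datum he d).ι (el 1 0 0 0)) = (datum he d).ι (el 0 0 0 3) := by
  rw [BicyclicDatum.comm'_x_pow_ι]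
  exact congrArg _ (show ((α ^ 3) (el 1 0 0 0))⁻¹ * el 1 0 0 0 = el 0 0 0 3 by decide)

end Datum

end B18

open B18 in
theorem stmt16_general (e i : ℕ) (he : 2 ≤ e) (hi : ¬ 3 ∣ i - 1) :
    ∃ (M : Type) (_ : Group M) (_ : Finite M) (x y : M),
      Subgroup.closure {x, y} = ⊤ ∧
      Nat.card M = 3 ^ (8 + e) ∧
      IsMetabelian M ∧
      IsSigmaGroup M ∧
      (x ^ 3 ^ e) ^ 3 = 1 ∧
      y ^ 3 = sgen x y 3 * sgen x y 4 ^ 2 ∧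
      sgen x y 2 ^ 3 = sgen x y 4 * tgenB x y 4 ^ 2 * (x ^ 3 ^ e) ^ (i - 1) ∧
      sgen x y 3 ^ 3 = sgen x y 5 ∧
      tgenB x y 3 ^ 3 = sgen x y 5 ^ 2 * (x ^ 3 ^ e) ^ (2 * (i - 1)) ∧
      comm' (x ^ 3) y = sgen x y 4 * tgenB x y 4 * sgen x y 5 ^ 2 * (x ^ 3 ^ e) ^ (2 * (i - 1)) ∧
      comm' (x ^ 3) (sgen x y 2) = sgen x y 5 ∧
      tgenB x y 5 = sgen x y 5 * (x ^ 3 ^ e) ^ (i - 1) ∧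
      Nonempty (Abelianization M ≃* Multiplicative (ZMod (3 ^ e) × ZMod 3)) := by
  let D := datum he (i - 1)
  have h_gen : D.IsGenerated := isGenerated_datum he (i - 1)
  have h_card : Nat.card D.Extension = 3 ^ (8 + e) := card_extension_datum he (i - 1)
  refine ⟨D.Extension, inferInstance, Nat.finite_of_card_ne_zero (h_card.trans_ne (by positivity)),
    D.x, D.y, h_gen.closure_eq_top, h_card, h_gen.isMetabelian, isSigmaGroup_datum he (i - 1),
    x_pow_three_pow_pow_three he (i - 1), ?_, ?_, ?_, ?_, ?_, ?_, ?_,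
    h_gen.nonempty_abelianization_mulEquiv⟩ <;>
  simp only [D, sgen_two, sgen_three, sgen_four, sgen_five, tgenB_three, tgenB_four, tgenB_five,
    y_pow_three, comm'_x_pow_three_y, comm'_x_pow_three_ι, mul_comm 2 (i - 1), pow_mul _ (i - 1) 2,
    x_pow_three_pow_pow he hi, ← map_pow, ← map_mul] <;>
  exact congrArg _ (by decide)

theorem stmt16 (e i : ℕ) (he : 5 ≤ e) (hi : i = 2 ∨ i = 3) :
    ∃ (M : Type) (_ : Group M) (_ : Finite M) (x y : M),
      Subgroup.closure {x, y} = ⊤ ∧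
      Nat.card M = 3 ^ (8 + e) ∧
      IsMetabelian M ∧
      IsSigmaGroup M ∧
      (x ^ 3 ^ e) ^ 3 = 1 ∧
      y ^ 3 = sgen x y 3 * sgen x y 4 ^ 2 ∧
      sgen x y 2 ^ 3 = sgen x y 4 * tgenB x y 4 ^ 2 * (x ^ 3 ^ e) ^ (i - 1) ∧
      sgen x y 3 ^ 3 = sgen x y 5 ∧
      tgenB x y 3 ^ 3 = sgen x y 5 ^ 2 * (x ^ 3 ^ e) ^ (2 * (i - 1)) ∧
      comm' (x ^ 3) y = sgen x y 4 * tgenB x y 4 * sgen x y 5 ^ 2 * (x ^ 3 ^ e) ^ (2 * (i - 1)) ∧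
      comm' (x ^ 3) (sgen x y 2) = sgen x y 5 ∧
      tgenB x y 5 = sgen x y 5 * (x ^ 3 ^ e) ^ (i - 1) ∧
      Nonempty (Abelianization M ≃* Multiplicative (ZMod (3 ^ e) × ZMod 3)) :=
  stmt16_general e i (by omega) (by omega)
end
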